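/- arXiv:2404.07393 — 5 statements merged into one kernel-verified Lean document; each statement's English description precedes it below -/
import Mathlib

section
/- Let a ≥ 0 and b ≥ 2, and set λ = (2^a, 1^b) and μ = (2^{a+1}, 1^{b−2}), both partitions of 2a+b. Then μ covers λ in the standard immersion poset if and only if b(b−1)/2 > a. -/
open Finset MvPolynomial

/-- A partition of `n`, represented as a weakly decreasing list of positive
integers summing to `n`. -/
def IsPartitionOf (n : ℕ) (l : List ℕ) : Prop :=
  l.Pairwise (· ≥ ·) ∧ (∀ x ∈ l, 0 < x) ∧ l.sum = n

/-- `T : ℕ → ℕ → ℕ` is a semistandard Young tableau of shape `l`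
(rows weakly increase, columns strictly increase, entries are `0` outside
of the diagram; entries are 0-indexed, so entry value `k` stands for the
letter `k+1`). -/
def IsSSYT (l : List ℕ) (T : ℕ → ℕ → ℕ) : Prop :=
  (∀ i j1 j2, j1 ≤ j2 → j2 < l.getD i 0 → T i j1 ≤ T i j2) ∧
  (∀ i1 i2 j, i1 < i2 → j < l.getD i2 0 → T i1 j < T i2 j) ∧
  (∀ i j, l.getD i 0 ≤ j → T i j = 0)

/-- The tableau `T` of shape `l` has content `ν`: for every `k`, the number of
cells of the diagram of `l` whose entry is `k` equals the `(k+1)`-st part of `ν`. -/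
def HasContent (l : List ℕ) (T : ℕ → ℕ → ℕ) (ν : List ℕ) : Prop :=
  ∀ k, Nat.card {c : ℕ × ℕ // c.2 < l.getD c.1 0 ∧ T c.1 c.2 = k} = ν.getD k 0

/-- The Kostka number `K_{l,ν}`: the number of semistandard Young tableaux of
shape `l` and content `ν`. -/
noncomputable def kostka (l ν : List ℕ) : ℕ :=
  Nat.card {T : ℕ → ℕ → ℕ // IsSSYT l T ∧ HasContent l T ν}

/-- `f^λ`, the number of standard Young tableaux of shape `l`. -/
noncomputable def fSYT (l : List ℕ) : ℕ := kostka l (List.replicate l.sum 1)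

/-- Dominance order: all partial sums of `l` are at most those of `m`. -/
def DomLE (l m : List ℕ) : Prop := ∀ k, (l.take k).sum ≤ (m.take k).sum

/-- The standard immersion order: dominance together with `f^λ ≤ f^μ`. -/
def StdLE (l m : List ℕ) : Prop := DomLE l m ∧ fSYT l ≤ fSYT m

/-- Strict standard immersion order. -/
def StdLT (l m : List ℕ) : Prop := StdLE l m ∧ l ≠ m

/-- `m` covers `l` in the standard immersion poset on partitions of `n`. -/
def StdCovBy (n : ℕ) (l m : List ℕ) : Prop :=
  StdLT l m ∧ ∀ ν, IsPartitionOf n ν → StdLT l ν → ¬ StdLT ν m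

/-- `l` is a maximal element of the standard immersion poset on partitions of `n`. -/
def StdMaximal (n : ℕ) (l : List ℕ) : Prop :=
  ∀ m, IsPartitionOf n m → m ≠ l → ¬ StdLE l m

/-- The immersion order on partitions of `n`: `l ≤_I m` iff
`K_{l,α} ≤ K_{m,α}` for every partition `α` of `n`. -/
def ImmersionLE (n : ℕ) (l m : List ℕ) : Prop :=
  ∀ ν, IsPartitionOf n ν → kostka l ν ≤ kostka m ν

/-- Strict immersion order. -/
def ImmersionLT (n : ℕ) (l m : List ℕ) : Prop := ImmersionLE n l m ∧ l ≠ m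

/-- `m` covers `l` in the immersion poset on partitions of `n`. -/
def ImmersionCovBy (n : ℕ) (l m : List ℕ) : Prop :=
  ImmersionLT n l m ∧ ∀ ν, IsPartitionOf n ν → ImmersionLT n l ν → ¬ ImmersionLT n ν m

/-- standard tableaux on a shape with row lengths `h`, entries `0..n-1` -/
def StdT (h : ℕ → ℕ) (n : ℕ) (T : ℕ → ℕ → ℕ) : Prop :=
  (∀ i j1 j2, j1 ≤ j2 → j2 < h i → T i j1 ≤ T i j2) ∧
  (∀ i1 i2 j, i1 < i2 → j < h i2 → T i1 j < T i2 j) ∧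
  (∀ i j, h i ≤ j → T i j = 0) ∧
  (∀ k, k < n → ∃ i j, j < h i ∧ T i j = k) ∧
  (∀ i j i' j', j < h i → j' < h i' → T i j = T i' j' → i = i' ∧ j = j') ∧
  (∀ i j, j < h i → T i j < n)

def setCell (i0 j0 v : ℕ) (T : ℕ → ℕ → ℕ) : ℕ → ℕ → ℕ :=
  fun i j => if i = i0 ∧ j = j0 then v else T i j

lemma setCell_self (i0 j0 v : ℕ) (T : ℕ → ℕ → ℕ) : setCell i0 j0 v T i0 j0 = v := by
  simp [setCell]

lemma setCell_ne (i0 j0 v : ℕ) (T : ℕ → ℕ → ℕ) (i j : ℕ) (h : ¬ (i = i0 ∧ j = j0)) :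
    setCell i0 j0 v T i j = T i j := by
  simp only [setCell, if_neg h]

lemma corner_forward (h h' : ℕ → ℕ) (n i0 j0 : ℕ)
    (hc : ∀ i j, j < h' i ↔ (j < h i ∨ (i = i0 ∧ j = j0)))
    (h0 : h i0 = j0)
    (T : ℕ → ℕ → ℕ) (hT : StdT h' (n + 1) T) (hn : T i0 j0 = n) :
    StdT h n (setCell i0 j0 0 T) := by
  obtain ⟨h1, h2, h3, h4, h5, h6⟩ := hT
  have hnc : ∀ i j, j < h i → ¬ (i = i0 ∧ j = j0) := by
    rintro i j hj ⟨rfl, rfl⟩; omega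
  have hcell : ∀ i j, j < h i → j < h' i := fun i j hj => (hc i j).2 (Or.inl hj)
  have hv : ∀ i j, j < h i → setCell i0 j0 0 T i j = T i j :=
    fun i j hj => setCell_ne _ _ _ _ _ _ (hnc i j hj)
  refine ⟨?_, ?_, ?_, ?_, ?_, ?_⟩
  · intro i j1 j2 h12 hj
    rw [hv i j1 (by omega), hv i j2 hj]
    exact h1 i j1 j2 h12 (hcell _ _ hj)
  · intro i1 i2 j h12 hj
    rw [hv i2 j hj]
    have := h2 i1 i2 j h12 (hcell _ _ hj)
    unfold setCell
    split_ifs <;> omega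
  · intro i j hj
    by_cases hcc : i = i0 ∧ j = j0
    · simp [setCell, hcc]
    · rw [setCell_ne _ _ _ _ _ _ hcc]
      apply h3
      by_contra hlt
      rcases (hc i j).1 (by omega) with h | h
      · omega
      · exact hcc h
  · intro k hk
    obtain ⟨i, j, hj, hk'⟩ := h4 k (by omega)
    rcases (hc i j).1 hj with h | ⟨rfl, rfl⟩
    · exact ⟨i, j, h, by rw [hv i j h, hk']⟩
    · omega
  · intro i j i' j' hj hj' he
    rw [hv i j hj, hv i' j' hj'] at he
    exact h5 i j i' j' (hcell _ _ hj) (hcell _ _ hj') he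
  · intro i j hj
    rw [hv i j hj]
    have := h6 i j (hcell _ _ hj)
    have hne : T i j ≠ n := by
      intro he
      exact hnc i j hj (h5 i j i0 j0 (hcell _ _ hj) ((hc i0 j0).2 (Or.inr ⟨rfl, rfl⟩)) (by omega))
    omega

lemma corner_backward (h h' : ℕ → ℕ) (n i0 j0 : ℕ)
    (hc : ∀ i j, j < h' i ↔ (j < h i ∨ (i = i0 ∧ j = j0)))
    (h0 : h i0 = j0) (hup : ∀ i, i < i0 → j0 < h i) (hdn : ∀ i, i0 < i → h i ≤ j0)
    (T : ℕ → ℕ → ℕ) (hT : StdT h n T) :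
    StdT h' (n + 1) (setCell i0 j0 n T) := by
  obtain ⟨h1, h2, h3, h4, h5, h6⟩ := hT
  have hnc : ∀ i j, j < h i → ¬ (i = i0 ∧ j = j0) := by
    rintro i j hj ⟨rfl, rfl⟩; omega
  have hv : ∀ i j, j < h i → setCell i0 j0 n T i j = T i j :=
    fun i j hj => setCell_ne _ _ _ _ _ _ (hnc i j hj)
  have hs := setCell_self i0 j0 n T
  refine ⟨?_, ?_, ?_, ?_, ?_, ?_⟩
  · intro i j1 j2 h12 hj
    rcases (hc i j2).1 hj with hj | ⟨rfl, rfl⟩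
    · rw [hv i j1 (by omega), hv i j2 hj]
      exact h1 i j1 j2 h12 hj
    · rw [hs]
      rcases Nat.lt_or_ge j1 j2 with hlt | hge
      · rw [hv i j1 (by omega)]
        exact (h6 i j1 (by omega)).le
      · have : j1 = j2 := by omega
        subst this
        exact hs.le
  · intro i1 i2 j h12 hj
    rcases (hc i2 j).1 hj with hj | ⟨rfl, rfl⟩
    · rw [hv i2 j hj]
      have hne : ¬ (i1 = i0 ∧ j = j0) := by
        rintro ⟨rfl, rfl⟩
        have := hdn i2 h12
        omega
      rw [setCell_ne _ _ _ _ _ _ hne]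
      exact h2 i1 i2 j h12 hj
    · rw [hs, hv i1 j (hup i1 h12)]
      exact h6 i1 j (hup i1 h12)
  · intro i j hj
    have hcc : ¬ (i = i0 ∧ j = j0) := fun hcc => by
      have := (hc i j).2 (Or.inr hcc); omega
    rw [setCell_ne _ _ _ _ _ _ hcc]
    apply h3
    by_contra hlt
    have := (hc i j).2 (Or.inl (by omega)); omega
  · intro k hk
    rcases Nat.lt_or_ge k n with hlt | hge
    · obtain ⟨i, j, hj, hk'⟩ := h4 k hlt
      exact ⟨i, j, (hc i j).2 (Or.inl hj), by rw [hv i j hj, hk']⟩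
    · exact ⟨i0, j0, (hc i0 j0).2 (Or.inr ⟨rfl, rfl⟩), by omega⟩
  · intro i j i' j' hj hj' he
    rcases (hc i j).1 hj with hj | ⟨rfl, rfl⟩ <;> rcases (hc i' j').1 hj' with hj' | ⟨rfl, rfl⟩
    · rw [hv i j hj, hv i' j' hj'] at he
      exact h5 i j i' j' hj hj' he
    · rw [hs, hv i j hj] at he
      have := h6 i j hj
      omega
    · rw [hs, hv i' j' hj'] at he
      have := h6 i' j' hj'
      omega
    · exact ⟨rfl, rfl⟩
  · intro i j hj
    rcases (hc i j).1 hj with hj | ⟨rfl, rfl⟩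
    · rw [hv i j hj]
      have := h6 i j hj
      omega
    · omega

lemma corner_bij (h h' : ℕ → ℕ) (n i0 j0 : ℕ)
    (hc : ∀ i j, j < h' i ↔ (j < h i ∨ (i = i0 ∧ j = j0)))
    (h0 : h i0 = j0) (hup : ∀ i, i < i0 → j0 < h i) (hdn : ∀ i, i0 < i → h i ≤ j0) :
    setCell i0 j0 n '' {T | StdT h n T} = {T | StdT h' (n + 1) T ∧ T i0 j0 = n} ∧
    Set.InjOn (setCell i0 j0 n) {T | StdT h n T} := by
  constructor
  · ext T
    constructor
    · rintro ⟨S, hS, rfl⟩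
      exact ⟨corner_backward h h' n i0 j0 hc h0 hup hdn S hS, setCell_self _ _ _ _⟩
    · rintro ⟨hT, hn⟩
      refine ⟨_, corner_forward h h' n i0 j0 hc h0 T hT hn, ?_⟩
      funext i j
      by_cases hcc : i = i0 ∧ j = j0
      · obtain ⟨rfl, rfl⟩ := hcc
        rw [setCell_self, hn]
      · rw [setCell_ne _ _ _ _ _ _ hcc, setCell_ne _ _ _ _ _ _ hcc]
  · intro S hS S' hS' he
    funext i j
    by_cases hcc : i = i0 ∧ j = j0
    · obtain ⟨rfl, rfl⟩ := hcc
      rw [hS.2.2.1 i j h0.le, hS'.2.2.1 i j h0.le]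
    · have := congrFun (congrFun he i) j
      rwa [setCell_ne _ _ _ _ _ _ hcc, setCell_ne _ _ _ _ _ _ hcc] at this

/-- row lengths of the shape `(2^a,1^b)` -/
def hh (a b i : ℕ) : ℕ := if i < a then 2 else if i < a + b then 1 else 0

lemma lt_hh (a b i j : ℕ) : j < hh a b i ↔ (j = 0 ∧ i < a + b) ∨ (j = 1 ∧ i < a) := by
  unfold hh; split_ifs <;> omega

def AA (a b : ℕ) : Set (ℕ → ℕ → ℕ) := {T | StdT (hh a b) (2 * a + b) T}

/-- remove from first column -/
lemma col1 (a b : ℕ) :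
    ∃ F : (ℕ → ℕ → ℕ) → (ℕ → ℕ → ℕ), Set.InjOn F (AA a b) ∧
      F '' (AA a b) = {T | T ∈ AA a (b + 1) ∧ T (a + b) 0 = 2 * a + b} := by
  have := corner_bij (hh a b) (hh a (b + 1)) (2 * a + b) (a + b) 0
    (by intro i j; rw [lt_hh, lt_hh]; omega) (by simp [hh])
    (by intro i hi; rw [lt_hh]; omega)
    (by intro i hi; unfold hh; split_ifs <;> omega)
  exact ⟨_, this.2, this.1⟩

lemma col2 (a b : ℕ) :
    ∃ F : (ℕ → ℕ → ℕ) → (ℕ → ℕ → ℕ), Set.InjOn F (AA a (b + 1)) ∧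
      F '' (AA a (b + 1)) = {T | T ∈ AA (a + 1) b ∧ T a 1 = 2 * a + b + 1} := by
  have := corner_bij (hh a (b + 1)) (hh (a + 1) b) (2 * a + b + 1) a 1
    (by intro i j; rw [lt_hh, lt_hh]; omega) (by simp [hh])
    (by intro i hi; rw [lt_hh]; omega)
    (by intro i hi; unfold hh; split_ifs <;> omega)
  refine ⟨_, this.2, this.1.trans ?_⟩
  unfold AA
  rw [show 2 * (a + 1) + b = 2 * a + b + 1 + 1 by ring]
  rfl

/-- location of the largest entry -/
lemma top_loc (a b n : ℕ) (hn : 2 * a + b = n + 1) (T : ℕ → ℕ → ℕ) (hT : T ∈ AA a b) :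
    (0 < b ∧ T (a + b - 1) 0 = n) ∨ (0 < a ∧ T (a - 1) 1 = n) := by
  obtain ⟨h1, h2, h3, h4, h5, h6⟩ := hT
  rw [hn] at h4 h6
  obtain ⟨i, j, hj, hk⟩ := h4 n (by omega)
  rcases (lt_hh _ _ _ _).1 hj with ⟨rfl, hi⟩ | ⟨rfl, hi⟩
  · have hlast : i = a + b - 1 := by
      by_contra hne
      have hc : 0 < hh a b (i + 1) := by rw [lt_hh]; omega
      have := h2 i (i + 1) 0 (by omega) hc
      have := h6 (i + 1) 0 hc
      omega
    by_cases hb : 0 < b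
    · left; exact ⟨hb, by rw [← hlast, hk]⟩
    · exfalso
      have hc : 1 < hh a b i := by rw [lt_hh]; omega
      have e1 := h1 i 0 1 (by omega) hc
      have e2 := h6 i 1 hc
      have := h5 i 0 i 1 hj hc (by omega)
      omega
  · right
    have hlast : i = a - 1 := by
      by_contra hne
      have hc : 1 < hh a b (i + 1) := by rw [lt_hh]; omega
      have := h2 i (i + 1) 1 (by omega) hc
      have := h6 (i + 1) 1 hc
      omega
    exact ⟨by omega, by rw [← hlast, hk]⟩

lemma AA_zero : AA 0 0 = {fun _ _ => 0} := by
  ext T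
  have hz : ∀ i, hh 0 0 i = 0 := by intro i; simp [hh]
  simp only [AA, StdT, Set.mem_ofPred_eq, Set.mem_singleton_iff, hz]
  constructor
  · intro h
    funext i j
    exact h.2.2.1 i j (by omega)
  · rintro rfl
    simp

lemma AA_count (n : ℕ) : ∀ a b, 2 * a + b = n → (AA a b).Finite ∧
    (AA a b).ncard * ((a + b + 1).factorial * a.factorial) = (b + 1) * (2 * a + b).factorial := by
  induction n with
  | zero =>
    intro a b h
    obtain rfl : a = 0 := by omega
    obtain rfl : b = 0 := by omega
    rw [AA_zero]
    simp
  | succ n ih =>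
    intro a b hab
    rcases a with _ | a
    · obtain ⟨b, rfl⟩ : ∃ c, b = c + 1 := ⟨b - 1, by omega⟩
      obtain ⟨F, hF, hI⟩ := col1 0 b
      obtain ⟨hf, hcount⟩ := ih 0 b (by omega)
      have he : AA 0 (b + 1) = F '' AA 0 b := by
        rw [hI]
        ext T
        refine ⟨fun hT => ⟨hT, ?_⟩, fun hT => hT.1⟩
        rcases top_loc 0 (b + 1) n hab T hT with ⟨_, h⟩ | ⟨h, _⟩
        · rw [show 0 + (b + 1) - 1 = 0 + b by omega] at h
          omega
        · omega
      rw [he, Set.InjOn.ncard_image hF]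
      refine ⟨hf.image F, ?_⟩
      simp only [mul_zero, zero_add, Nat.factorial_zero, mul_one] at hcount ⊢
      rw [Nat.factorial_succ (b + 1), mul_left_comm, hcount, Nat.factorial_succ]
    · obtain ⟨F, hF, hI⟩ := col2 a b
      obtain ⟨hf, hcount⟩ := ih a (b + 1) (by omega)
      rcases b with _ | b
      · have he : AA (a + 1) 0 = F '' AA a (0 + 1) := by
          rw [hI]
          ext T
          refine ⟨fun hT => ⟨hT, ?_⟩, fun hT => hT.1⟩
          rcases top_loc (a + 1) 0 n hab T hT with ⟨h, _⟩ | ⟨_, h⟩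
          · omega
          · rw [show a + 1 - 1 = a by omega] at h
            omega
        rw [he, Set.InjOn.ncard_image hF]
        refine ⟨hf.image F, ?_⟩
        rw [show a + 1 + 0 + 1 = a + (0 + 1) + 1 by ring, Nat.factorial_succ a,
          show 2 * (a + 1) + 0 = (2 * a + (0 + 1)) + 1 by ring, Nat.factorial_succ (2 * a + (0 + 1))]
        linear_combination (a + 1) * hcount
      · obtain ⟨G, hG, hJ⟩ := col1 (a + 1) b
        obtain ⟨hf2, hcount2⟩ := ih (a + 1) b (by omega)
        have he : AA (a + 1) (b + 1) = F '' AA a (b + 1 + 1) ∪ G '' AA (a + 1) b := by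
          rw [hI, hJ]
          ext T
          constructor
          · intro hT
            rcases top_loc (a + 1) (b + 1) n hab T hT with ⟨_, h⟩ | ⟨_, h⟩
            · right
              rw [show a + 1 + (b + 1) - 1 = a + 1 + b by omega] at h
              exact ⟨hT, by omega⟩
            · left
              rw [show a + 1 - 1 = a by omega] at h
              exact ⟨hT, by omega⟩
          · rintro (hT | hT) <;> exact hT.1
        have hdis : Disjoint (F '' AA a (b + 1 + 1)) (G '' AA (a + 1) b) := by
          rw [hI, hJ, Set.disjoint_left]
          rintro T ⟨hT, h⟩ ⟨-, h'⟩
          have := hT.2.2.2.2.1 a 1 (a + 1 + b) 0 (by rw [lt_hh]; omega) (by rw [lt_hh]; omega)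
            (by omega)
          omega
        rw [he, Set.ncard_union_eq hdis (hf.image F) (hf2.image G),
          Set.InjOn.ncard_image hF, Set.InjOn.ncard_image hG]
        refine ⟨(hf.image F).union (hf2.image G), ?_⟩
        rw [show a + (b + 1 + 1) + 1 = (a + b + 2) + 1 by ring,
          Nat.factorial_succ (a + b + 2), show 2 * a + (b + 1 + 1) = 2 * a + b + 2 by ring] at hcount
        rw [show a + 1 + b + 1 = a + b + 2 by ring, Nat.factorial_succ a,
          show 2 * (a + 1) + b = 2 * a + b + 2 by ring] at hcount2
        rw [show a + 1 + (b + 1) + 1 = (a + b + 2) + 1 by ring, Nat.factorial_succ a,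
          Nat.factorial_succ (a + b + 2),
          show 2 * (a + 1) + (b + 1) = (2 * a + b + 2) + 1 by ring,
          Nat.factorial_succ (2 * a + b + 2)]
        linear_combination (a + 1) * hcount + (a + b + 3) * hcount2

lemma getD_shape (a b i : ℕ) :
    (List.replicate a 2 ++ List.replicate b 1).getD i 0 = hh a b i := by
  unfold hh
  simp only [List.getD_eq_getElem?_getD, List.getElem?_append, List.getElem?_replicate,
    List.length_replicate]
  split_ifs <;> first | rfl | omega

lemma sum_shape (a b : ℕ) : (List.replicate a 2 ++ List.replicate b 1).sum = 2 * a + b := by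
  simp; ring

lemma cells_finite (a b : ℕ) (T : ℕ → ℕ → ℕ) (k : ℕ) :
    Finite {c : ℕ × ℕ // c.2 < hh a b c.1 ∧ T c.1 c.2 = k} := by
  apply Set.Finite.to_subtype
  apply ((Set.finite_Iio (a + b)).prod (Set.finite_Iio 2)).subset
  rintro ⟨i, j⟩ ⟨hj, -⟩
  rcases (lt_hh _ _ _ _).1 hj with h | h <;> simp only [Set.mem_prod, Set.mem_Iio] <;> omega

lemma tab_iff (a b : ℕ) (T : ℕ → ℕ → ℕ) :
    (IsSSYT (List.replicate a 2 ++ List.replicate b 1) T ∧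
      HasContent (List.replicate a 2 ++ List.replicate b 1) T
        (List.replicate (2 * a + b) 1)) ↔ T ∈ AA a b := by
  simp only [IsSSYT, HasContent, getD_shape, AA, StdT, Set.mem_ofPred_eq]
  have hrep : ∀ k, (List.replicate (2 * a + b) 1).getD k 0 = if k < 2 * a + b then 1 else 0 := by
    intro k
    simp only [List.getD_eq_getElem?_getD, List.getElem?_replicate]
    split_ifs <;> rfl
  simp only [hrep]
  constructor
  · rintro ⟨⟨h1, h2, h3⟩, h⟩
    have hlt : ∀ i j, j < hh a b i → T i j < 2 * a + b := by
      intro i j hj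
      by_contra hge
      have hk := h (T i j)
      rw [if_neg hge] at hk
      have := cells_finite a b T (T i j)
      rw [Finite.card_eq_zero_iff] at hk
      exact hk.false ⟨(i, j), hj, rfl⟩
    refine ⟨h1, h2, h3, ?_, ?_, hlt⟩
    · intro k hk
      have hk' := h k
      rw [if_pos hk, Nat.card_eq_one_iff_unique] at hk'
      obtain ⟨-, ⟨⟨⟨i, j⟩, hj, he⟩⟩⟩ := hk'
      exact ⟨i, j, hj, he⟩
    · intro i j i' j' hj hj' he
      have hk' := h (T i j)
      rw [if_pos (hlt i j hj), Nat.card_eq_one_iff_unique] at hk'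
      have := hk'.1.elim ⟨(i, j), hj, rfl⟩ ⟨(i', j'), hj', he.symm⟩
      simpa using this
  · rintro ⟨h1, h2, h3, h4, h5, h6⟩
    refine ⟨⟨h1, h2, h3⟩, ?_⟩
    intro k
    split_ifs with hk
    · rw [Nat.card_eq_one_iff_unique]
      obtain ⟨i, j, hj, he⟩ := h4 k hk
      refine ⟨⟨?_⟩, ⟨⟨(i, j), hj, he⟩⟩⟩
      rintro ⟨⟨i1, j1⟩, hj1, he1⟩ ⟨⟨i2, j2⟩, hj2, he2⟩
      have := h5 i1 j1 i2 j2 hj1 hj2 (he1.trans he2.symm)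
      simpa using this
    · have := cells_finite a b T k
      rw [Finite.card_eq_zero_iff]
      refine ⟨?_⟩
      rintro ⟨⟨i, j⟩, hj, he⟩
      have := h6 i j hj
      simp only at he
      omega

lemma fSYT_shape (a b : ℕ) :
    fSYT (List.replicate a 2 ++ List.replicate b 1) = (AA a b).ncard := by
  unfold fSYT kostka
  rw [sum_shape]
  simp only [tab_iff]
  rfl

lemma fSYT_le_iff (a c : ℕ) :
    fSYT (List.replicate a 2 ++ List.replicate (c + 2) 1) ≤
      fSYT (List.replicate (a + 1) 2 ++ List.replicate c 1) ↔
    (c + 3) * (a + 1) ≤ (c + 1) * (a + c + 3) := by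
  rw [fSYT_shape, fSYT_shape]
  have e1 := (AA_count _ a (c + 2) rfl).2
  have e2 := (AA_count _ (a + 1) c rfl).2
  rw [show a + (c + 2) + 1 = (a + c + 2) + 1 by ring, Nat.factorial_succ (a + c + 2)] at e1
  rw [show a + 1 + c + 1 = a + c + 2 by ring, Nat.factorial_succ a,
    show 2 * (a + 1) + c = 2 * a + (c + 2) by ring] at e2
  set g1 := (AA a (c + 2)).ncard
  set g2 := (AA (a + 1) c).ncard
  have hN : 0 < (2 * a + (c + 2)).factorial := Nat.factorial_pos _
  have hD : 0 < (a + c + 3) * (a + 1) * ((a + c + 2).factorial * a.factorial) := by positivity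
  rw [← Nat.mul_le_mul_right_iff hD]
  rw [show g1 * ((a + c + 3) * (a + 1) * ((a + c + 2).factorial * a.factorial)) =
      (c + 3) * (a + 1) * (2 * a + (c + 2)).factorial by linear_combination (a + 1) * e1,
    show g2 * ((a + c + 3) * (a + 1) * ((a + c + 2).factorial * a.factorial)) =
      (c + 1) * (a + c + 3) * (2 * a + (c + 2)).factorial by linear_combination (a + c + 3) * e2]
  exact Nat.mul_le_mul_right_iff hN

lemma take_shape (p q k : ℕ) : ((List.replicate p 2 ++ List.replicate q 1).take k).sum =
    2 * min k p + min (k - p) q := by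
  simp [List.take_append]; ring

lemma shape_of_le_two (l : List ℕ) (h1 : l.Pairwise (· ≥ ·)) (h2 : ∀ x ∈ l, 0 < x)
    (h3 : ∀ x ∈ l, x ≤ 2) : ∃ p q, l = List.replicate p 2 ++ List.replicate q 1 := by
  induction l with
  | nil => exact ⟨0, 0, rfl⟩
  | cons x l ih =>
    rw [List.pairwise_cons] at h1
    have hx2 := h2 x (by simp)
    have hx3 := h3 x (by simp)
    have hx : x = 1 ∨ x = 2 := by omega
    rcases hx with rfl | rfl
    · refine ⟨0, l.length + 1, ?_⟩
      rw [List.replicate_zero, List.nil_append, List.eq_replicate_iff]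
      refine ⟨by simp, ?_⟩
      intro y hy
      rcases List.mem_cons.1 hy with rfl | hy'
      · rfl
      · have := h1.1 y hy'
        have := h2 y hy
        omega
    · obtain ⟨p, q, rfl⟩ := ih h1.2 (fun y hy => h2 y (List.mem_cons_of_mem _ hy))
        (fun y hy => h3 y (List.mem_cons_of_mem _ hy))
      exact ⟨p + 1, q, by simp [List.replicate_succ]⟩

lemma between (a c : ℕ) (l : List ℕ) (hl : IsPartitionOf (2 * a + (c + 2)) l)
    (h1 : DomLE (List.replicate a 2 ++ List.replicate (c + 2) 1) l)
    (h2 : DomLE l (List.replicate (a + 1) 2 ++ List.replicate c 1)) :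
    l = List.replicate a 2 ++ List.replicate (c + 2) 1 ∨
    l = List.replicate (a + 1) 2 ++ List.replicate c 1 := by
  obtain ⟨hd, hpos, hsum⟩ := hl
  have hle : ∀ x ∈ l, x ≤ 2 := by
    intro x hx
    have := h2 1
    rw [take_shape] at this
    rcases l with _ | ⟨y, l⟩
    · simp at hx
    · simp at this
      rw [List.pairwise_cons] at hd
      rcases List.mem_cons.1 hx with rfl | hx'
      · omega
      · have := hd.1 x hx'
        omega
  obtain ⟨p, q, rfl⟩ := shape_of_le_two l hd hpos hle
  rw [sum_shape] at hsum
  have e1 := h1 a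
  have e2 := h2 (a + 2)
  rw [take_shape, take_shape] at e1 e2
  have hp : p = a ∨ p = a + 1 := by omega
  rcases hp with rfl | rfl
  · left
    rw [show q = c + 2 by omega]
  · right
    rw [show q = c by omega]

/-- `(2^{a+1},1^{b-2})` covers `(2^a,1^b)` in the standard immersion
poset on partitions of `2a+b` if and only if `b(b-1)/2 > a`. -/
theorem std_cover_two_column (a b : ℕ) (hb : 2 ≤ b) :
    StdCovBy (2 * a + b) (List.replicate a 2 ++ List.replicate b 1)
      (List.replicate (a + 1) 2 ++ List.replicate (b - 2) 1) ↔ a < b * (b - 1) / 2 := by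
  obtain ⟨c, rfl⟩ : ∃ c, b = c + 2 := ⟨b - 2, by omega⟩
  rw [show c + 2 - 2 = c by omega, show c + 2 - 1 = c + 1 by omega, Nat.lt_iff_add_one_le,
    Nat.le_div_iff_mul_le (by norm_num)]
  have key : (a + 1) * 2 ≤ (c + 2) * (c + 1) ↔ (c + 3) * (a + 1) ≤ (c + 1) * (a + c + 3) := by
    constructor <;> intro h <;> nlinarith
  rw [key, ← fSYT_le_iff]
  constructor
  · intro h
    exact h.1.1.2
  · intro h
    refine ⟨⟨⟨?_, h⟩, ?_⟩, ?_⟩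
    · intro k
      rw [take_shape, take_shape]
      omega
    · intro he
      have := congrArg List.length he
      simp at this
      omega
    · intro l hl h1 h2
      rcases between a c l hl h1.1.1 h2.1.1 with e | e
      · exact h1.2 e.symm
      · exact h2.2 e
end

section
/- Let a ≥ 1 and b ≥ 0. The two-row partition (a+b, a) is a maximal element in the standard immersion poset on partitions of 2a+b if and only if b(b+3)/2 ≥ a. -/
open Finset MvPolynomial

/-- Two-row standard tableaux. -/
def SS (p q : ℕ) : Set (ℕ → ℕ → ℕ) := {T | q ≤ p ∧
  (∀ i j, j < p → i < j → T 0 i < T 0 j) ∧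
  (∀ i j, j < q → i < j → T 1 i < T 1 j) ∧
  (∀ j, j < q → T 0 j < T 1 j) ∧
  (∀ j, j < p → T 0 j < p + q) ∧
  (∀ j, j < q → T 1 j < p + q) ∧
  (∀ i j, i < p → j < q → T 0 i ≠ T 1 j) ∧
  (∀ j, p ≤ j → T 0 j = 0) ∧
  (∀ j, q ≤ j → T 1 j = 0) ∧
  (∀ i j, 2 ≤ i → T i j = 0) ∧
  (∀ k, k < p + q → (∃ j, j < p ∧ T 0 j = k) ∨ (∃ j, j < q ∧ T 1 j = k))}

def upd (i j v : ℕ) (T : ℕ → ℕ → ℕ) : ℕ → ℕ → ℕ :=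
  fun a b => if a = i ∧ b = j then v else T a b

theorem upd0_mem {p q : ℕ} {T : ℕ → ℕ → ℕ} (h : T ∈ SS p q) :
    upd 0 p (p + q) T ∈ SS (p + 1) q := by
  obtain ⟨h0, h1, h2, h3, h4, h5, h6, h7, h8, h9, h10⟩ := h
  refine ⟨by omega, ?_, ?_, ?_, ?_, ?_, ?_, ?_, ?_, ?_, ?_⟩
  · clear h2 h3 h5 h6 h7 h8 h9 h10; grind [upd]
  · clear h1 h3 h4 h6 h7 h8 h9 h10; grind [upd]
  · clear h1 h2 h5 h6 h7 h8 h9 h10; grind [upd]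
  · clear h1 h2 h3 h5 h6 h7 h8 h9 h10; grind [upd]
  · clear h1 h2 h3 h4 h6 h7 h8 h9 h10; grind [upd]
  · clear h1 h2 h3 h7 h8 h9 h10; grind [upd]
  · clear h1 h2 h3 h4 h5 h6 h8 h9 h10; grind [upd]
  · clear h1 h2 h3 h4 h5 h6 h7 h9 h10; grind [upd]
  · clear h1 h2 h3 h4 h5 h6 h7 h8 h10; grind [upd]
  · intro k hk
    by_cases hkk : k = p + q
    · exact Or.inl ⟨p, by omega, by simp [upd, hkk]⟩
    · rcases h10 k (by omega) with ⟨j, hj, e⟩ | ⟨j, hj, e⟩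
      · exact Or.inl ⟨j, by omega, by simp [upd, e]; omega⟩
      · exact Or.inr ⟨j, by omega, by simp [upd, e]⟩

theorem upd1_mem {p q : ℕ} (hpq : q + 1 ≤ p) {T : ℕ → ℕ → ℕ} (h : T ∈ SS p q) :
    upd 1 q (p + q) T ∈ SS p (q + 1) := by
  obtain ⟨h0, h1, h2, h3, h4, h5, h6, h7, h8, h9, h10⟩ := h
  refine ⟨by omega, ?_, ?_, ?_, ?_, ?_, ?_, ?_, ?_, ?_, ?_⟩
  · clear h2 h3 h5 h6 h7 h8 h9 h10; grind [upd]
  · clear h1 h3 h4 h6 h7 h8 h9 h10; grind [upd]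
  · clear h1 h2 h5 h6 h7 h8 h9 h10; grind [upd]
  · clear h1 h2 h3 h5 h6 h7 h8 h9 h10; grind [upd]
  · clear h1 h2 h3 h4 h6 h7 h8 h9 h10; grind [upd]
  · clear h1 h2 h3 h7 h8 h9 h10; grind [upd]
  · clear h1 h2 h3 h4 h5 h6 h8 h9 h10; grind [upd]
  · clear h1 h2 h3 h4 h5 h6 h7 h9 h10; grind [upd]
  · clear h1 h2 h3 h4 h5 h6 h7 h8 h10; grind [upd]
  · intro k hk
    by_cases hkk : k = p + q
    · exact Or.inr ⟨q, by omega, by simp [upd, hkk]⟩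
    · rcases h10 k (by omega) with ⟨j, hj, e⟩ | ⟨j, hj, e⟩
      · exact Or.inl ⟨j, by omega, by simp [upd, e]⟩
      · exact Or.inr ⟨j, by omega, by simp [upd, e]; omega⟩

theorem dn0_mem {p q : ℕ} {T : ℕ → ℕ → ℕ} (h : T ∈ SS (p + 1) q) (hT : T 0 p = p + q) :
    upd 0 p 0 T ∈ SS p q := by
  obtain ⟨h0, h1, h2, h3, h4, h5, h6, h7, h8, h9, h10⟩ := h
  have hq : q ≤ p := by
    by_contra hc
    have := h3 p (by omega)
    have := h5 p (by omega)
    omega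
  refine ⟨hq, ?_, ?_, ?_, ?_, ?_, ?_, ?_, ?_, ?_, ?_⟩
  · clear h2 h3 h5 h6 h7 h8 h9 h10; grind [upd]
  · clear h1 h3 h4 h6 h7 h8 h9 h10; grind [upd]
  · clear h1 h2 h5 h6 h7 h8 h9 h10; grind [upd]
  · intro j hj
    have := h1 j p (by omega) hj
    simp [upd]; split <;> omega
  · intro j hj
    have := h5 j hj
    have := h6 p j (by omega) hj
    simp [upd]; omega
  · clear h1 h2 h3 h7 h8 h9 h10; grind [upd]
  · clear h1 h2 h3 h4 h5 h6 h8 h9 h10; grind [upd]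
  · clear h1 h2 h3 h4 h5 h6 h7 h9 h10; grind [upd]
  · clear h1 h2 h3 h4 h5 h6 h7 h8 h10; grind [upd]
  · intro k hk
    rcases h10 k (by omega) with ⟨j, hj, e⟩ | ⟨j, hj, e⟩
    · have : j ≠ p := by rintro rfl; omega
      exact Or.inl ⟨j, by omega, by simp [upd, e]; omega⟩
    · exact Or.inr ⟨j, by omega, by simp [upd, e]⟩

theorem dn1_mem {p q : ℕ} {T : ℕ → ℕ → ℕ} (h : T ∈ SS p (q + 1)) (hT : T 1 q = p + q) :
    upd 1 q 0 T ∈ SS p q := by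
  obtain ⟨h0, h1, h2, h3, h4, h5, h6, h7, h8, h9, h10⟩ := h
  refine ⟨by omega, ?_, ?_, ?_, ?_, ?_, ?_, ?_, ?_, ?_, ?_⟩
  · clear h2 h3 h5 h6 h7 h8 h9 h10; grind [upd]
  · clear h1 h3 h4 h6 h7 h8 h9 h10; grind [upd]
  · clear h1 h2 h5 h6 h7 h8 h9 h10; grind [upd]
  · intro j hj
    have := h4 j hj
    have := h6 j q hj (by omega)
    simp [upd]; omega
  · intro j hj
    have := h2 j q (by omega) hj
    simp [upd]; split <;> omega
  · clear h1 h2 h3 h7 h8 h9 h10; grind [upd]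
  · clear h1 h2 h3 h4 h5 h6 h8 h9 h10; grind [upd]
  · clear h1 h2 h3 h4 h5 h6 h7 h9 h10; grind [upd]
  · clear h1 h2 h3 h4 h5 h6 h7 h8 h10; grind [upd]
  · intro k hk
    rcases h10 k (by omega) with ⟨j, hj, e⟩ | ⟨j, hj, e⟩
    · exact Or.inl ⟨j, by omega, by simp [upd, e]⟩
    · have : j ≠ q := by rintro rfl; omega
      exact Or.inr ⟨j, by omega, by simp [upd, e]; omega⟩

theorem upd_upd_self {i j v : ℕ} {T : ℕ → ℕ → ℕ} : upd i j (T i j) (upd i j v T) = T := by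
  funext a b
  grind [upd]

theorem top_cases {p q n : ℕ} {T : ℕ → ℕ → ℕ} (h : T ∈ SS p q) (hn : n + 1 = p + q) :
    (0 < p ∧ T 0 (p - 1) = n) ∨ (0 < q ∧ T 1 (q - 1) = n) := by
  obtain ⟨h0, h1, h2, h3, h4, h5, h6, h7, h8, h9, h10⟩ := h
  rcases h10 n (by omega) with ⟨j, hj, e⟩ | ⟨j, hj, e⟩
  · left
    refine ⟨by omega, ?_⟩
    by_cases hjp : j = p - 1
    · rw [← hjp, e]
    · have := h1 j (p - 1) (by omega) (by omega)
      have := h4 (p - 1) (by omega)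
      omega
  · right
    refine ⟨by omega, ?_⟩
    by_cases hjp : j = q - 1
    · rw [← hjp, e]
    · have := h2 j (q - 1) (by omega) (by omega)
      have := h5 (q - 1) (by omega)
      omega

theorem inj0 (p q v : ℕ) : Set.InjOn (upd 0 p v) (SS p q) := by
  intro T hT T' hT' e
  have h1 := hT.2.2.2.2.2.2.2.1 p le_rfl
  have h2 := hT'.2.2.2.2.2.2.2.1 p le_rfl
  have e1 : upd 0 p (T 0 p) (upd 0 p v T) = T := upd_upd_self
  have e2 : upd 0 p (T' 0 p) (upd 0 p v T') = T' := upd_upd_self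
  rw [← e1, ← e2, e, h1, h2]

theorem inj1 (p q v : ℕ) : Set.InjOn (upd 1 q v) (SS p q) := by
  intro T hT T' hT' e
  have h1 := hT.2.2.2.2.2.2.2.2.1 q le_rfl
  have h2 := hT'.2.2.2.2.2.2.2.2.1 q le_rfl
  have e1 : upd 1 q (T 1 q) (upd 1 q v T) = T := upd_upd_self
  have e2 : upd 1 q (T' 1 q) (upd 1 q v T') = T' := upd_upd_self
  rw [← e1, ← e2, e, h1, h2]

theorem rec_zero (p : ℕ) : (SS (p + 1) 0).encard = (SS p 0).encard := by
  rw [← (inj0 p 0 (p + 0)).encard_image]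
  congr 1
  ext T
  constructor
  · intro h
    rcases top_cases (n := p) h (by omega) with ⟨_, e⟩ | ⟨h', _⟩
    · simp only [Nat.add_sub_cancel] at e
      refine ⟨_, dn0_mem h (by omega), ?_⟩
      have : p + 0 = T 0 p := by omega
      rw [this, upd_upd_self]
    · omega
  · rintro ⟨T', h, rfl⟩
    exact upd0_mem h

theorem rec_succ (p q : ℕ) (hq : q ≤ p) :
    (SS (p + 1) (q + 1)).encard = (SS p (q + 1)).encard + (SS (p + 1) q).encard := by
  rw [← (inj0 p (q + 1) (p + (q + 1))).encard_image, ← (inj1 (p + 1) q (p + 1 + q)).encard_image,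
    ← Set.encard_union_eq]
  · congr 1
    ext T
    constructor
    · intro h
      rcases top_cases (n := p + (q + 1)) h (by omega) with ⟨_, e⟩ | ⟨_, e⟩
      · simp only [Nat.add_sub_cancel] at e
        left
        refine ⟨_, dn0_mem h (by omega), ?_⟩
        rw [← e, upd_upd_self]
      · simp only [Nat.add_sub_cancel] at e
        right
        refine ⟨_, dn1_mem h (by omega), ?_⟩
        have : p + 1 + q = T 1 q := by omega
        rw [this, upd_upd_self]
    · rintro (⟨T', h, rfl⟩ | ⟨T', h, rfl⟩)
      · exact upd0_mem h
      · exact upd1_mem (by omega) h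
  · rw [Set.disjoint_left]
    rintro _ ⟨T, h, rfl⟩ ⟨T', h', e⟩
    have m := upd1_mem (by omega) h'
    rw [e] at m
    have h1 := m.2.2.2.2.2.2.1 p q (by omega) (by omega)
    have h2 : upd 1 q (p + 1 + q) T' 1 q = p + 1 + q := by simp [upd]
    rw [e] at h2
    apply h1
    rw [h2]
    simp [upd]
    omega

theorem SS_zero : (SS 0 0).encard = 1 := by
  rw [Set.encard_eq_one]
  refine ⟨fun _ _ => 0, ?_⟩
  ext T
  simp only [Set.mem_singleton_iff]
  constructor
  · rintro ⟨h0, h1, h2, h3, h4, h5, h6, h7, h8, h9, h10⟩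
    funext i j
    rcases i with _ | _ | i
    · exact h7 j (by omega)
    · exact h8 j (by omega)
    · exact h9 _ j (by omega)
  · rintro rfl
    exact ⟨by omega, by simp, by simp, by simp, by simp, by simp, by simp, by simp, by simp,
      by simp, by simp⟩

theorem SS_empty (p : ℕ) : SS p (p + 1) = ∅ := by
  ext T
  simp only [Set.mem_empty_iff_false, iff_false]
  intro h
  have := h.1
  omega

/-- The hook formula for two rows. -/
theorem SS_card (n p q : ℕ) (hn : p + q = n) (hq : q ≤ p + 1) :
    ∃ N : ℕ, (SS p q).encard = N ∧
      (N : ℤ) * (p + 1).factorial * q.factorial = (p + q).factorial * (p + 1 - q) := by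
  induction n generalizing p q with
  | zero =>
    obtain rfl : p = 0 := by omega
    obtain rfl : q = 0 := by omega
    exact ⟨1, by simpa using SS_zero, by simp⟩
  | succ n ih =>
    by_cases hqp : q = p + 1
    · subst hqp
      exact ⟨0, by simp [SS_empty], by simp⟩
    · obtain ⟨p, rfl⟩ : ∃ p', p = p' + 1 := ⟨p - 1, by omega⟩
      rcases q with _ | q
      · obtain ⟨N, h1, h2⟩ := ih p 0 (by omega) (by omega)
        refine ⟨N, by rw [rec_zero, h1], ?_⟩
        rw [Nat.factorial_succ (p + 1)]
        simp only [Nat.factorial_zero, Nat.add_zero, Nat.cast_one, mul_one] at h2 ⊢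
        rw [Nat.factorial_succ p] at h2 ⊢
        push_cast at h2 ⊢
        linear_combination (p + 2 : ℤ) * h2
      · obtain ⟨N, h1, h2⟩ := ih p (q + 1) (by omega) (by omega)
        obtain ⟨M, h3, h4⟩ := ih (p + 1) q (by omega) (by omega)
        refine ⟨N + M, by rw [rec_succ _ _ (by omega), h1, h3]; simp, ?_⟩
        have e1 : p + 1 + q = p + q + 1 := by omega
        have e2 : p + (q + 1) = p + q + 1 := by omega
        have e3 : p + 1 + (q + 1) = p + q + 1 + 1 := by omega
        rw [e1] at h4
        rw [e2] at h2
        rw [e3, Nat.factorial_succ (p + q + 1)]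
        rw [Nat.factorial_succ (p + 1)] at h4 ⊢
        rw [Nat.factorial_succ q] at h2 ⊢
        push_cast at h2 h4 ⊢
        linear_combination (p + 2 : ℤ) * h2 + (q + 1 : ℤ) * h4

theorem getD_rep (n k : ℕ) : (List.replicate n 1).getD k 0 = if k < n then 1 else 0 := by
  by_cases h : k < n <;> simp [List.getD, h]

theorem getD_two (p q : ℕ) (i : ℕ) :
    [p, q].getD i 0 = if i = 0 then p else if i = 1 then q else 0 := by
  rcases i with _ | _ | i <;> simp

theorem SS_iff (p q : ℕ) (hq : q ≤ p) (T : ℕ → ℕ → ℕ) :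
    (IsSSYT [p, q] T ∧ HasContent [p, q] T (List.replicate [p, q].sum 1)) ↔ T ∈ SS p q := by
  have hs : [p, q].sum = p + q := by simp
  unfold IsSSYT HasContent
  rw [hs]
  simp only [getD_rep, getD_two]
  constructor
  · rintro ⟨⟨h1, h2, h3⟩, h4⟩
    have key : ∀ k, k < p + q → ∃! c : ℕ × ℕ,
        c.2 < (if c.1 = 0 then p else if c.1 = 1 then q else 0) ∧ T c.1 c.2 = k := by
      intro k hk
      have := h4 k
      rw [if_pos hk, Nat.card_eq_one_iff_unique] at this
      obtain ⟨hsub, ⟨c, hc⟩⟩ := this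
      exact ⟨c, hc, fun c' hc' => congrArg Subtype.val (hsub.elim ⟨c', hc'⟩ ⟨c, hc⟩)⟩
    have bd : ∀ i j, j < (if i = 0 then p else if i = 1 then q else 0) → T i j < p + q := by
      intro i j hj
      by_contra hc
      have := h4 (T i j)
      rw [if_neg hc, Nat.card_eq_zero] at this
      rcases this with h | h
      · exact h.false ⟨(i, j), hj, rfl⟩
      · have fin : Finite {c : ℕ × ℕ // c.2 < (if c.1 = 0 then p else if c.1 = 1 then q else 0)
            ∧ T c.1 c.2 = T i j} := by
          apply Set.Finite.subset (((Finset.range 2) ×ˢ (Finset.range (p + q)) :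
            Finset (ℕ × ℕ)).finite_toSet)
          rintro ⟨x, y⟩ ⟨hxy, -⟩
          simp only [Finset.coe_product, Set.mem_prod, Finset.coe_range, Set.mem_Iio]
          dsimp only at hxy
          split_ifs at hxy <;> omega
        exact h.not_finite fin
    have inj : ∀ i j i' j', j < (if i = 0 then p else if i = 1 then q else 0) →
        j' < (if i' = 0 then p else if i' = 1 then q else 0) → T i j = T i' j' →
        i = i' ∧ j = j' := by
      intro i j i' j' hj hj' e
      have := (key _ (bd i j hj)).unique (y₁ := (i, j)) (y₂ := (i', j')) ⟨hj, rfl⟩ ⟨hj', e.symm⟩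
      simpa using this
    refine ⟨hq, ?_, ?_, ?_, ?_, ?_, ?_, ?_, ?_, ?_, ?_⟩
    · intro i j hj hij
      have a1 := h1 0 i j hij.le (by simpa using hj)
      have a2 := inj 0 i 0 j (by simp; omega) (by simp; omega)
      by_contra hc
      have := a2 (by omega)
      omega
    · intro i j hj hij
      have a1 := h1 1 i j hij.le (by simpa using hj)
      have a2 := inj 1 i 1 j (by simp; omega) (by simp; omega)
      by_contra hc
      have := a2 (by omega)
      omega
    · intro j hj
      exact h2 0 1 j (by omega) (by simpa using hj)
    · intro j hj
      exact bd 0 j (by simpa using hj)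
    · intro j hj
      exact bd 1 j (by simpa using hj)
    · intro i j hi hj e
      have := inj 0 i 1 j (by simpa using hi) (by simpa using hj) e
      omega
    · intro j hj
      exact h3 0 j (by simpa using hj)
    · intro j hj
      exact h3 1 j (by simpa using hj)
    · intro i j hi
      apply h3 i j
      rw [if_neg (by omega), if_neg (by omega)]
      omega
    · intro k hk
      obtain ⟨⟨i, j⟩, ⟨hc, e⟩, -⟩ := key k hk
      dsimp only at hc e
      split_ifs at hc with c1 c2
      · subst c1; exact Or.inl ⟨j, hc, e⟩
      · subst c2; exact Or.inr ⟨j, hc, e⟩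
      · omega
  · rintro ⟨h0, h1, h2, h3, h4, h5, h6, h7, h8, h9, h10⟩
    refine ⟨⟨?_, ?_, ?_⟩, ?_⟩
    · intro i j1 j2 hj hj2
      rcases eq_or_lt_of_le hj with rfl | hj
      · exact le_rfl
      split_ifs at hj2 with c1 c2
      · subst c1; exact (h1 _ _ hj2 hj).le
      · subst c2; exact (h2 _ _ hj2 hj).le
      · omega
    · intro i1 i2 j hi hj
      split_ifs at hj with c1 c2
      · omega
      · subst c2
        obtain rfl : i1 = 0 := by omega
        exact h3 j hj
      · omega
    · intro i j hj
      split_ifs at hj with c1 c2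
      · subst c1; exact h7 j hj
      · subst c2; exact h8 j hj
      · exact h9 i j (by omega)
    · have inj0 : ∀ i j, i < p → j < p → T 0 i = T 0 j → i = j := by
        intro i j hi hj e
        rcases lt_trichotomy i j with h | h | h
        · have := h1 i j hj h
          omega
        · exact h
        · have := h1 j i hi h
          omega
      have inj1 : ∀ i j, i < q → j < q → T 1 i = T 1 j → i = j := by
        intro i j hi hj e
        rcases lt_trichotomy i j with h | h | h
        · have := h2 i j hj h
          omega
        · exact h
        · have := h2 j i hi h
          omega
      intro k
      split_ifs with hk
      · rw [Nat.card_eq_one_iff_unique]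
        constructor
        · constructor
          rintro ⟨⟨i, j⟩, hc, e⟩ ⟨⟨i', j'⟩, hc', e'⟩
          dsimp only at hc e hc' e'
          simp only [Subtype.mk.injEq, Prod.mk.injEq]
          split_ifs at hc with c1 c2
          · subst c1
            split_ifs at hc' with c1' c2'
            · subst c1'
              exact ⟨rfl, inj0 _ _ hc hc' (by omega)⟩
            · subst c2'
              exact absurd (e.trans e'.symm) (h6 _ _ hc hc')
            · omega
          · subst c2
            split_ifs at hc' with c1' c2'
            · subst c1'
              exact absurd (e'.trans e.symm) (h6 _ _ hc' hc)
            · subst c2'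
              exact ⟨rfl, inj1 _ _ hc hc' (by omega)⟩
            · omega
          · omega
        · rcases h10 k hk with ⟨j, hj, e⟩ | ⟨j, hj, e⟩
          · exact ⟨⟨(0, j), by simpa using hj, e⟩⟩
          · exact ⟨⟨(1, j), by simpa using hj, e⟩⟩
      · rw [Nat.card_eq_zero]
        left
        constructor
        rintro ⟨⟨i, j⟩, hc, e⟩
        dsimp only at hc e
        split_ifs at hc with c1 c2
        · subst c1
          have := h4 j hc
          omega
        · subst c2
          have := h5 j hc
          omega
        · omega

theorem fSYT_two (p q : ℕ) (hq : q ≤ p) :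
    (fSYT [p, q] : ℤ) * (p + 1).factorial * q.factorial = (p + q).factorial * (p + 1 - q) := by
  obtain ⟨N, h1, h2⟩ := SS_card _ p q rfl (by omega)
  have : fSYT [p, q] = N := by
    unfold fSYT kostka
    simp only [SS_iff p q hq]
    have h3 : Nat.card (SS p q) = (SS p q).ncard := rfl
    have h4 : (SS p q).ncard = N := by simp [Set.ncard, h1]
    exact h3.trans h4
  rw [this, h2]

theorem fSYT_one (p : ℕ) : fSYT [p] = fSYT [p, 0] := by
  have e : ∀ i, [p].getD i 0 = [p, 0].getD i 0 := by
    intro i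
    rcases i with _ | _ | i <;> simp
  have hs : [p].sum = [p, 0].sum := by simp
  unfold fSYT kostka IsSSYT HasContent
  simp only [hs, e]

theorem fSYT_pos (p q : ℕ) (hq : q ≤ p) : 0 < fSYT [p, q] := by
  have h := fSYT_two p q hq
  rcases Nat.eq_zero_or_pos (fSYT [p, q]) with h0 | h0
  · rw [h0] at h
    have a : (0 : ℤ) < (p + q).factorial := by exact_mod_cast Nat.factorial_pos _
    have b : (0 : ℤ) < p + 1 - q := by
      have : (q : ℤ) ≤ p := by exact_mod_cast hq
      linarith
    have := mul_pos a b
    simp at h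
    rcases h with h | h <;> simp_all
  · exact h0

theorem two_row_ratio (q b : ℕ) :
    (fSYT [q + 1 + b, q + 1] : ℤ) * ((q + 1) * (b + 3)) =
      fSYT [q + b + 2, q] * ((q + b + 3) * (b + 1)) := by
  have h1 := fSYT_two (q + 1 + b) (q + 1) (by omega)
  have h2 := fSYT_two (q + b + 2) q (by omega)
  have e1 : q + 1 + b + 1 = q + b + 2 := by omega
  have e2 : q + 1 + b + (q + 1) = q + b + 2 + q := by omega
  rw [e1, e2, Nat.factorial_succ q] at h1
  rw [Nat.factorial_succ (q + b + 2)] at h2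
  have p1 : ((q + b + 2).factorial : ℤ) ≠ 0 := by exact_mod_cast Nat.factorial_ne_zero _
  have p2 : (q.factorial : ℤ) ≠ 0 := by exact_mod_cast Nat.factorial_ne_zero _
  apply mul_left_cancel₀ (mul_ne_zero p1 p2)
  push_cast at h1 h2
  linear_combination (b + 3 : ℤ) * h1 - (b + 1 : ℤ) * h2

theorem le_iff (q b : ℕ) :
    fSYT [q + 1 + b, q + 1] ≤ fSYT [q + b + 2, q] ↔ (b + 1) * (b + 2) ≤ 2 * (q + 1) := by
  have h := two_row_ratio q b
  have h1 : 0 < fSYT [q + 1 + b, q + 1] := fSYT_pos _ _ (by omega)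
  have h2 : 0 < fSYT [q + b + 2, q] := fSYT_pos _ _ (by omega)
  generalize fSYT [q + 1 + b, q + 1] = x at *
  generalize fSYT [q + b + 2, q] = y at *
  have h' : x * ((q + 1) * (b + 3)) = y * ((q + b + 3) * (b + 1)) := by exact_mod_cast h
  have k : (q + 1) * (b + 3) + (b + 1) * (b + 2) = (q + b + 3) * (b + 1) + 2 * (q + 1) := by ring
  constructor
  · intro hxy
    by_contra hc
    have : (q + 1) * (b + 3) < (q + b + 3) * (b + 1) := by omega
    have := Nat.mul_lt_mul_of_le_of_lt hxy this h2
    omega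
  · intro hle
    by_contra hc
    have h3 : (q + b + 3) * (b + 1) ≤ (q + 1) * (b + 3) := by omega
    have h4 : y * ((q + b + 3) * (b + 1)) < x * ((q + 1) * (b + 3)) :=
      Nat.mul_lt_mul_of_lt_of_le (by omega) h3 (by positivity)
    omega

theorem chain (k q b : ℕ) (h : 2 * (q + k + 1) < (b + 1) * (b + 2)) :
    fSYT [q + k + 1 + b + (k + 1), q] < fSYT [q + k + 1 + b, q + k + 1] := by
  induction k generalizing b with
  | zero =>
    have := (le_iff q b).not.2 (by simpa using h)
    have e : q + 0 + 1 + b + (0 + 1) = q + b + 2 := by omega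
    rw [e]
    simpa using this
  | succ k ih =>
    have h1 := (le_iff (q + k + 1) b).not.2 (by rw [not_le]; exact lt_of_eq_of_lt (by ring) h)
    have h2 := ih (b + 2) (by nlinarith)
    have e1 : q + k + 1 + (b + 2) + (k + 1) = q + (k + 1) + 1 + b + (k + 1 + 1) := by omega
    have e2 : q + k + 1 + (b + 2) = q + k + 1 + b + 2 := by omega
    rw [e1, e2] at h2
    rw [not_le] at h1
    exact h2.trans h1

theorem cond_iff (a b : ℕ) : a ≤ b * (b + 3) / 2 ↔ 2 * a < (b + 1) * (b + 2) := by
  rw [Nat.le_div_iff_mul_le (by omega)]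
  have k : (b + 1) * (b + 2) = b * (b + 3) + 2 := by ring
  have ev : 2 ∣ b * (b + 3) := by
    have := Nat.even_mul_succ_self b
    have e : b * (b + 3) = b * (b + 1) + 2 * b := by ring
    rw [e]
    exact dvd_add this.two_dvd (dvd_mul_right _ _)
  omega

/-- `(a+b, a)` is maximal in the standard immersion poset on
partitions of `2a+b` if and only if `b(b+3)/2 ≥ a`. -/
theorem std_maximal_two_row (a b : ℕ) (ha : 1 ≤ a) :
    StdMaximal (2 * a + b) [a + b, a] ↔ a ≤ b * (b + 3) / 2 := by
  rw [cond_iff]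
  constructor
  · intro hmax
    by_contra hc
    obtain ⟨q, rfl⟩ : ∃ q, a = q + 1 := ⟨a - 1, by omega⟩
    have hle := (le_iff q b).2 (by omega)
    rcases Nat.eq_zero_or_pos q with rfl | hq
    · refine hmax [0 + b + 2] ⟨by simp, by simp, by simp; omega⟩ (by simp) ⟨?_, ?_⟩
      · intro k
        rcases k with _ | _ | k <;> simp <;> omega
      · rw [fSYT_one]; exact hle
    · refine hmax [q + b + 2, q] ⟨by simp; omega, by simp; omega, by simp; omega⟩ (by simp)
        ⟨?_, hle⟩
      intro k
      rcases k with _ | _ | k <;> simp <;> omega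
  · rintro h m ⟨hm1, hm2, hm3⟩ hne ⟨hd, hf⟩
    have main : ∀ x y, x + y = 2 * a + b → a + b ≤ x → y ≠ a → fSYT [x, y] < fSYT [a + b, a] := by
      intro x y hxy hx hy
      obtain ⟨k, hk⟩ : ∃ k, a = y + k + 1 := ⟨a - y - 1, by omega⟩
      subst hk
      have := chain k y b h
      have e : y + k + 1 + b + (k + 1) = x := by omega
      rwa [e] at this
    rcases m with _ | ⟨x, _ | ⟨y, _ | ⟨z, l⟩⟩⟩
    · simp at hm3; omega
    · simp at hm3
      have := main x 0 (by omega) (by omega) (by omega)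
      rw [← fSYT_one] at this
      omega
    · have d1 := hd 1
      simp at hm3 d1
      have hy : y ≠ a := by
        rintro rfl
        apply hne
        have : x = y + b := by omega
        rw [this]
      have := main x y (by omega) (by omega) hy
      omega
    · have d2 := hd 2
      have := hm2 z (by simp)
      simp at hm3 d2
      omega
end

section
/- Let a ≥ 2 and b ≥ 0. The partition (a+b, a, 1) is a maximal element in the standard immersion poset on partitions of 2a+b+1 if and only if a ≤ (b+1)(b+2)/2. -/
open Finset MvPolynomial

/-- Standard tableaux of row-length function `s` with entries `0..n-1`. -/
def SYTset (s : ℕ → ℕ) (n : ℕ) : Set (ℕ → ℕ → ℕ) :=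
  {T | (∀ i j1 j2, j1 ≤ j2 → j2 < s i → T i j1 ≤ T i j2) ∧
  (∀ i1 i2 j, i1 < i2 → j < s i2 → T i1 j < T i2 j) ∧
  (∀ i j, s i ≤ j → T i j = 0) ∧
  (∀ i j, j < s i → T i j < n) ∧
  (∀ k < n, ∃ i j, j < s i ∧ T i j = k) ∧
  (∀ i j p q, j < s i → q < s p → T i j = T p q → i = p ∧ j = q)}

/-- Set the entry `(i, j)` of `T` to `v`. -/
def setEntry (T : ℕ → ℕ → ℕ) (i j v : ℕ) : ℕ → ℕ → ℕ :=
  fun p q => if p = i ∧ q = j then v else T p q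

/-- Row `i` is shortened by one. -/
def shorten (s : ℕ → ℕ) (i : ℕ) : ℕ → ℕ := fun p => if p = i then s i - 1 else s p

/-- Tableaux with the largest entry at the end of row `i`. -/
def lastIn (s : ℕ → ℕ) (n i : ℕ) : Set (ℕ → ℕ → ℕ) :=
  {T | T ∈ SYTset s (n + 1) ∧ 0 < s i ∧ T i (s i - 1) = n}

theorem SYTset_succ (s : ℕ → ℕ) (n : ℕ) :
    SYTset s (n + 1) = ⋃ i, lastIn s n i := by
  ext T
  simp only [Set.mem_iUnion, lastIn, Set.mem_ofPred_eq]
  constructor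
  · intro hT
    obtain ⟨h1, h2, h3, h4, h5, h6⟩ := id hT
    obtain ⟨i, j, hj, hij⟩ := h5 n (by omega)
    refine ⟨i, hT, by omega, ?_⟩
    have ha := h1 i j (s i - 1) (by omega) (by omega)
    have hb := h4 i (s i - 1) (by omega)
    omega
  · rintro ⟨i, hT, -⟩
    exact hT

theorem lastIn_disjoint (s : ℕ → ℕ) (n i i' : ℕ) (h : i ≠ i') :
    Disjoint (lastIn s n i) (lastIn s n i') := by
  rw [Set.disjoint_left]
  rintro T ⟨hT, h0, h1⟩ ⟨-, h0', h1'⟩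
  obtain ⟨-, -, -, -, -, h6⟩ := hT
  exact h (h6 i (s i - 1) i' (s i' - 1) (by omega) (by omega) (by omega)).1

theorem lastIn_empty (s : ℕ → ℕ) (n i : ℕ) (h : s i ≤ s (i + 1)) : lastIn s n i = ∅ := by
  rw [Set.eq_empty_iff_forall_notMem]
  rintro T ⟨⟨h1, h2, h3, h4, h5, h6⟩, h0, h7⟩
  have ha := h2 i (i + 1) (s i - 1) (by omega) (by omega)
  have hb := h4 (i + 1) (s i - 1) (by omega)
  omega

theorem lastIn_eq_image (s : ℕ → ℕ) (n i : ℕ) (hs : Antitone s) (h : s (i + 1) < s i) :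
    lastIn s n i = (fun T => setEntry T i (s i - 1) n) '' SYTset (shorten s i) n := by
  have hsh : ∀ i' j, j < shorten s i i' ↔ (j < s i' ∧ ¬ (i' = i ∧ j = s i - 1)) := by
    intro i' j
    unfold shorten
    split_ifs with hi
    · subst hi; omega
    · simp [hi]
  have hbig : ∀ i2, i < i2 → s i2 ≤ s (i + 1) := fun i2 hi => hs hi
  have hsmall : ∀ i1, i1 < i → s i ≤ s i1 := fun i1 hi => hs hi.le
  ext T
  constructor
  · rintro ⟨⟨h1, h2, h3, h4, h5, h6⟩, h0, h7⟩
    have key : ∀ i' j, j < shorten s i i' → setEntry T i (s i - 1) 0 i' j = T i' j := by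
      intro i' j hj
      rw [hsh] at hj
      simp [setEntry, hj.2]
    refine ⟨setEntry T i (s i - 1) 0, ⟨?_, ?_, ?_, ?_, ?_, ?_⟩, ?_⟩
    · intro i' j1 j2 h12 hj
      have hj1 : j1 < shorten s i i' := lt_of_le_of_lt h12 hj
      rw [key _ _ hj, key _ _ hj1]
      exact h1 _ _ _ h12 ((hsh _ _).1 hj).1
    · intro i1 i2 j h12 hj
      rw [key _ _ hj]
      have := h2 i1 i2 j h12 ((hsh _ _).1 hj).1
      unfold setEntry
      split_ifs <;> omega
    · intro i' j hj
      unfold setEntry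
      split_ifs with hc
      · rfl
      · apply h3
        by_contra hcon
        have := (hsh i' j).2 ⟨by omega, hc⟩
        omega
    · intro i' j hj
      rw [key _ _ hj]
      obtain ⟨ha, hb⟩ := (hsh _ _).1 hj
      have := h4 i' j ha
      by_contra hcon
      exact hb (h6 i' j i (s i - 1) ha (by omega) (by omega))
    · intro k hk
      obtain ⟨i', j, hj, hT⟩ := h5 k (by omega)
      have hj' : j < shorten s i i' := by
        rw [hsh]
        refine ⟨hj, ?_⟩
        rintro ⟨rfl, rfl⟩
        omega
      exact ⟨i', j, hj', by rw [key _ _ hj', hT]⟩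
    · intro i1 j1 i2 j2 hj1 hj2
      rw [key _ _ hj1, key _ _ hj2]
      exact h6 _ _ _ _ ((hsh _ _).1 hj1).1 ((hsh _ _).1 hj2).1
    · funext i' j
      simp only [setEntry]
      split_ifs with hc
      · rw [hc.1, hc.2, h7]
      · rfl
  · rintro ⟨T, ⟨h1, h2, h3, h4, h5, h6⟩, rfl⟩
    have hlast : setEntry T i (s i - 1) n i (s i - 1) = n := by simp [setEntry]
    have key : ∀ i' j, j < shorten s i i' → setEntry T i (s i - 1) n i' j = T i' j := by
      intro i' j hj
      rw [hsh] at hj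
      simp [setEntry, hj.2]
    have hcase : ∀ i' j, j < s i' → (i' = i ∧ j = s i - 1) ∨ j < shorten s i i' := by
      intro i' j hj
      rw [hsh]
      tauto
    refine ⟨⟨?_, ?_, ?_, ?_, ?_, ?_⟩, by omega, hlast⟩
    · intro i' j1 j2 h12 hj
      dsimp only
      rcases hcase i' j1 (by omega) with ⟨rfl, rfl⟩ | hj1
      · have : j2 = s i' - 1 := by omega
        rw [this]
      · rcases hcase i' j2 hj with ⟨rfl, rfl⟩ | hj2
        · rw [hlast, key _ _ hj1]
          exact (h4 _ _ hj1).le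
        · rw [key _ _ hj1, key _ _ hj2]
          exact h1 _ _ _ h12 hj2
    · intro i1 i2 j h12 hj
      dsimp only
      have hs12 := hs h12.le
      rcases hcase i1 j (by omega) with ⟨rfl, rfl⟩ | hj1
      · have := hbig i2 h12
        omega
      · rcases hcase i2 j hj with ⟨rfl, rfl⟩ | hj2
        · rw [hlast, key _ _ hj1]
          exact h4 _ _ hj1
        · rw [key _ _ hj1, key _ _ hj2]
          exact h2 _ _ _ h12 hj2
    · intro i' j hj
      have hc : ¬ (i' = i ∧ j = s i - 1) := by
        rintro ⟨rfl, rfl⟩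
        omega
      simp only [setEntry, hc, if_false]
      apply h3
      by_contra hcon
      have := ((hsh i' j).1 (by omega)).1
      omega
    · intro i' j hj
      dsimp only
      rcases hcase i' j hj with ⟨rfl, rfl⟩ | hj1
      · rw [hlast]; omega
      · rw [key _ _ hj1]
        have := h4 _ _ hj1
        omega
    · intro k hk
      dsimp only
      by_cases hkn : k = n
      · exact ⟨i, s i - 1, by omega, by rw [hlast, hkn]⟩
      · obtain ⟨i', j, hj, hT⟩ := h5 k (by omega)
        exact ⟨i', j, ((hsh _ _).1 hj).1, by rw [key _ _ hj, hT]⟩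
    · intro i1 j1 i2 j2 hj1 hj2
      dsimp only
      rcases hcase i1 j1 hj1 with ⟨rfl, rfl⟩ | hj1'
      · rcases hcase i2 j2 hj2 with ⟨rfl, rfl⟩ | hj2'
        · intro _; exact ⟨rfl, rfl⟩
        · rw [hlast, key _ _ hj2']
          have := h4 _ _ hj2'
          omega
      · rcases hcase i2 j2 hj2 with ⟨rfl, rfl⟩ | hj2'
        · rw [hlast, key _ _ hj1']
          have := h4 _ _ hj1'
          omega
        · rw [key _ _ hj1', key _ _ hj2']
          exact h6 _ _ _ _ hj1' hj2'

theorem lastIn_encard (s : ℕ → ℕ) (n i : ℕ) (hs : Antitone s) (h : s (i + 1) < s i) :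
    (lastIn s n i).encard = (SYTset (shorten s i) n).encard := by
  rw [lastIn_eq_image s n i hs h]
  apply Set.InjOn.encard_image
  intro T hT T' hT' heq
  funext i' j
  by_cases hc : i' = i ∧ j = s i - 1
  · have hz : shorten s i i' ≤ j := by simp [shorten, hc.1, hc.2]
    rw [hT.2.2.1 i' j hz, hT'.2.2.1 i' j hz]
  · have := congrFun (congrFun heq i') j
    simpa [setEntry, hc] using this

/-- The row-length function of a shape with three rows. -/
def shape3 (x y z : ℕ) : ℕ → ℕ
  | 0 => x
  | 1 => y
  | 2 => z
  | _ => 0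

theorem shape3_antitone (x y z : ℕ) (hyx : y ≤ x) (hzy : z ≤ y) : Antitone (shape3 x y z) := by
  apply antitone_nat_of_succ_le
  intro i
  match i with
  | 0 => exact hyx
  | 1 => exact hzy
  | 2 => exact Nat.zero_le _
  | _ + 3 => exact Nat.zero_le _

theorem SYTset_zero : SYTset (shape3 0 0 0) 0 = {fun _ _ => 0} := by
  have h0 : ∀ i, shape3 0 0 0 i = 0 := by
    intro i
    match i with
    | 0 => rfl
    | 1 => rfl
    | 2 => rfl
    | _ + 3 => rfl
  ext T
  simp only [SYTset, Set.mem_ofPred_eq, Set.mem_singleton_iff, h0]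
  constructor
  · rintro ⟨-, -, h, -⟩
    funext i j
    exact h i j (Nat.zero_le _)
  · rintro rfl
    simp

theorem SYTset_three (s : ℕ → ℕ) (n : ℕ) (hs : ∀ i, 3 ≤ i → s i = 0) :
    (SYTset s (n + 1)).encard =
      (lastIn s n 0).encard + (lastIn s n 1).encard + (lastIn s n 2).encard := by
  have : SYTset s (n + 1) = lastIn s n 0 ∪ lastIn s n 1 ∪ lastIn s n 2 := by
    rw [SYTset_succ]
    ext T
    simp only [Set.mem_iUnion, Set.mem_union]
    constructor
    · rintro ⟨i, hi⟩
      match i, hi with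
      | 0, hi => exact Or.inl (Or.inl hi)
      | 1, hi => exact Or.inl (Or.inr hi)
      | 2, hi => exact Or.inr hi
      | i + 3, hi =>
        have := hi.2.1
        rw [hs (i + 3) (by omega)] at this
        omega
    · rintro ((h | h) | h)
      exacts [⟨_, h⟩, ⟨_, h⟩, ⟨_, h⟩]
  rw [this, Set.encard_union_eq, Set.encard_union_eq]
  · exact lastIn_disjoint _ _ _ _ (by decide)
  · rw [Set.disjoint_union_left]
    exact ⟨lastIn_disjoint _ _ _ _ (by decide), lastIn_disjoint _ _ _ _ (by decide)⟩

theorem SYTset_count (n : ℕ) : ∀ x y z : ℕ, y ≤ x → z ≤ y → x + y + z = n →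
    ∃ m : ℕ, (SYTset (shape3 x y z) n).encard = m ∧
      (m : ℤ) * (x + 2).factorial * (y + 1).factorial * z.factorial =
        n.factorial * ((x : ℤ) - y + 1) * ((x : ℤ) - z + 2) * ((y : ℤ) - z + 1) := by
  induction n with
  | zero =>
    intro x y z hyx hzy hn
    obtain rfl : x = 0 := by omega
    obtain rfl : y = 0 := by omega
    obtain rfl : z = 0 := by omega
    refine ⟨1, ?_, by norm_num [Nat.factorial]⟩
    rw [SYTset_zero]
    simp
  | succ n ih =>
    intro x y z hyx hzy hn
    have hanti := shape3_antitone x y z hyx hzy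
    obtain ⟨m0, e0, q0⟩ : ∃ m : ℕ, (lastIn (shape3 x y z) n 0).encard = m ∧
        (m : ℤ) * (x + 1).factorial * (y + 1).factorial * z.factorial =
        n.factorial * ((x : ℤ) - y) * ((x : ℤ) - z + 1) * ((y : ℤ) - z + 1) := by
      by_cases h : x = y
      · refine ⟨0, ?_, by simp [h]⟩
        rw [lastIn_empty _ _ _ (by simp [shape3, h])]
        simp
      · obtain ⟨x, rfl⟩ : ∃ x', x = x' + 1 := ⟨x - 1, by omega⟩
        obtain ⟨m, e, q⟩ := ih x y z (by omega) hzy (by omega)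
        refine ⟨m, ?_, ?_⟩
        · rw [lastIn_encard _ _ _ hanti (by simp [shape3]; omega), ← e]
          congr 2
          funext i
          match i with
          | 0 => rfl
          | 1 => rfl
          | 2 => rfl
          | _ + 3 => rfl
        · rw [show x + 1 + 1 = x + 2 from rfl, q]
          push_cast
          ring
    obtain ⟨m1, e1, q1⟩ : ∃ m : ℕ, (lastIn (shape3 x y z) n 1).encard = m ∧
        (m : ℤ) * (x + 2).factorial * y.factorial * z.factorial =
        n.factorial * ((x : ℤ) - y + 2) * ((x : ℤ) - z + 2) * ((y : ℤ) - z) := by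
      by_cases h : y = z
      · refine ⟨0, ?_, by simp [h]⟩
        rw [lastIn_empty _ _ _ (by simp [shape3, h])]
        simp
      · obtain ⟨y, rfl⟩ : ∃ y', y = y' + 1 := ⟨y - 1, by omega⟩
        obtain ⟨m, e, q⟩ := ih x y z (by omega) (by omega) (by omega)
        refine ⟨m, ?_, ?_⟩
        · rw [lastIn_encard _ _ _ hanti (by simp [shape3]; omega), ← e]
          congr 2
          funext i
          match i with
          | 0 => rfl
          | 1 => rfl
          | 2 => rfl
          | _ + 3 => rfl
        · rw [q]
          push_cast
          ring
    obtain ⟨m2, e2, q2⟩ : ∃ m : ℕ, (lastIn (shape3 x y z) n 2).encard = m ∧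
        (m : ℤ) * (x + 2).factorial * (y + 1).factorial * z.factorial =
        z * (n.factorial * ((x : ℤ) - y + 1) * ((x : ℤ) - z + 3) * ((y : ℤ) - z + 2)) := by
      by_cases h : z = 0
      · refine ⟨0, ?_, by simp [h]⟩
        rw [lastIn_empty _ _ _ (by simp [shape3, h])]
        simp
      · obtain ⟨z, rfl⟩ : ∃ z', z = z' + 1 := ⟨z - 1, by omega⟩
        obtain ⟨m, e, q⟩ := ih x y z (by omega) (by omega) (by omega)
        refine ⟨m, ?_, ?_⟩
        · rw [lastIn_encard _ _ _ hanti (by simp [shape3]), ← e]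
          congr 2
          funext i
          match i with
          | 0 => rfl
          | 1 => rfl
          | 2 => rfl
          | _ + 3 => rfl
        · rw [Nat.factorial_succ z]
          push_cast
          linear_combination ((z : ℤ) + 1) * q
    refine ⟨m0 + m1 + m2, ?_, ?_⟩
    · rw [SYTset_three, e0, e1, e2]
      · push_cast; rfl
      · intro i hi
        match i, hi with
        | i + 3, _ => rfl
    · have hn' : (n : ℤ) = x + y + z - 1 := by omega
      rw [Nat.factorial_succ n]
      rw [show (x + 2).factorial = (x + 2) * (x + 1).factorial from rfl] at *
      rw [show (y + 1).factorial = (y + 1) * y.factorial from rfl] at *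
      push_cast at *
      rw [hn']
      linear_combination ((x : ℤ) + 2) * q0 + ((y : ℤ) + 1) * q1 + q2

theorem shape3_cells_finite (x y z : ℕ) : {c : ℕ × ℕ | c.2 < shape3 x y z c.1}.Finite := by
  apply Set.Finite.subset ((Set.finite_Iio 3).prod (Set.finite_Iio (x + y + z)))
  rintro ⟨i, j⟩ h
  simp only [Set.mem_ofPred_eq] at h
  simp only [Set.mem_prod, Set.mem_Iio]
  match i, h with
  | 0, h => simp only [shape3] at h; omega
  | 1, h => simp only [shape3] at h; omega
  | 2, h => simp only [shape3] at h; omega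
  | i + 3, h => simp [shape3] at h

theorem fSYT_eq_ncard (l : List ℕ) (x y z : ℕ) (hl : ∀ i, l.getD i 0 = shape3 x y z i) :
    fSYT l = (SYTset (shape3 x y z) l.sum).ncard := by
  unfold fSYT kostka
  rw [← Nat.card_coe_set_eq]
  apply Nat.card_congr
  apply Equiv.subtypeEquivRight
  intro T
  simp only [IsSSYT, HasContent, SYTset, Set.mem_ofPred_eq, hl]
  have hrep : ∀ k, (List.replicate l.sum 1).getD k 0 = if k < l.sum then 1 else 0 := by
    intro k
    simp only [List.getD_eq_getElem?_getD, List.getElem?_replicate]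
    split_ifs <;> rfl
  simp only [hrep]
  have hfin : ∀ k, Finite {c : ℕ × ℕ // c.2 < shape3 x y z c.1 ∧ T c.1 c.2 = k} := fun k =>
    ((shape3_cells_finite x y z).subset (fun c hc => hc.1) :
      {c : ℕ × ℕ | c.2 < shape3 x y z c.1 ∧ T c.1 c.2 = k}.Finite)
  constructor
  · rintro ⟨⟨h1, h2, h3⟩, hc⟩
    have h4 : ∀ i j, j < shape3 x y z i → T i j < l.sum := by
      intro i j hj
      by_contra hcon
      have := hc (T i j)
      rw [if_neg hcon, Nat.card_eq_zero] at this
      rcases this with h | h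
      · exact h.elim ⟨(i, j), hj, rfl⟩
      · exact (not_finite_iff_infinite.2 h) (hfin _)
    refine ⟨h1, h2, h3, h4, ?_, ?_⟩
    · intro k hk
      have := hc k
      rw [if_pos hk, Nat.card_eq_one_iff_unique] at this
      obtain ⟨⟨c, hc1, hc2⟩⟩ := this.2
      exact ⟨c.1, c.2, hc1, hc2⟩
    · intro i j i' j' hj hj' heq
      have := hc (T i j)
      rw [if_pos (h4 i j hj), Nat.card_eq_one_iff_unique] at this
      have hh := this.1.elim ⟨(i, j), hj, rfl⟩ ⟨(i', j'), hj', heq.symm⟩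
      simpa using hh
  · rintro ⟨h1, h2, h3, h4, h5, h6⟩
    refine ⟨⟨h1, h2, h3⟩, ?_⟩
    intro k
    split_ifs with hk
    · rw [Nat.card_eq_one_iff_unique]
      obtain ⟨i, j, hj, hT⟩ := h5 k hk
      refine ⟨⟨?_⟩, ⟨⟨(i, j), hj, hT⟩⟩⟩
      rintro ⟨⟨i1, j1⟩, ha, hb⟩ ⟨⟨i2, j2⟩, hc, hd⟩
      have := h6 i1 j1 i2 j2 ha hc (hb.trans hd.symm)
      simpa using this
    · rw [Nat.card_eq_zero]
      left
      constructor
      rintro ⟨⟨i, j⟩, ha, hb⟩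
      have := h4 i j ha
      simp only at hb
      omega

/-- The number of standard tableaux of a three-row shape, divided by `n!`. -/
def gRat (x y z : ℕ) : ℚ :=
  ((x : ℚ) - y + 1) * ((x : ℚ) - z + 2) * ((y : ℚ) - z + 1) /
    ((x + 2).factorial * (y + 1).factorial * z.factorial)

theorem fSYT_formula (l : List ℕ) (x y z : ℕ) (hyx : y ≤ x) (hzy : z ≤ y)
    (hl : ∀ i, l.getD i 0 = shape3 x y z i) (hs : l.sum = x + y + z) :
    (fSYT l : ℚ) = (x + y + z).factorial * gRat x y z := by
  obtain ⟨m, e, q⟩ := SYTset_count (x + y + z) x y z hyx hzy rfl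
  have : fSYT l = m := by
    rw [fSYT_eq_ncard l x y z hl, hs, Set.ncard, e]
    rfl
  rw [this, gRat]
  have q' : (m : ℚ) * (x + 2).factorial * (y + 1).factorial * z.factorial =
        (x + y + z).factorial * ((x : ℚ) - y + 1) * ((x : ℚ) - z + 2) * ((y : ℚ) - z + 1) := by
    exact_mod_cast q
  have hx : ((x + 2).factorial : ℚ) ≠ 0 := by exact_mod_cast Nat.factorial_ne_zero _
  have hy : ((y + 1).factorial : ℚ) ≠ 0 := by exact_mod_cast Nat.factorial_ne_zero _
  have hz : (z.factorial : ℚ) ≠ 0 := by exact_mod_cast Nat.factorial_ne_zero _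
  field_simp
  linear_combination q'

theorem poly_lt (a b : ℚ) (ha : 1 ≤ a) (hb : 0 ≤ b) (h : 2 * a ≤ (b + 1) * (b + 2)) :
    (b + 3) * (a + b + 2) * (a - 1) * (a + 1) < (b + 1) * (a + b + 1) * a * (a + b + 3) := by
  have h1 : 0 ≤ a ^ 2 * ((b + 1) * (b + 2) - 2 * a) := mul_nonneg (by positivity) (by linarith)
  have h2 : 0 ≤ a * (b + 2) * ((b + 1) * (b + 2) - 2 * a) :=
    mul_nonneg (by positivity) (by linarith)
  have h3 : 0 < (b + 2) * (b + 3) := by positivity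
  nlinarith

theorem poly_ge (a b : ℚ) (ha : 1 ≤ a) (hb : 0 ≤ b) (h : (b + 1) * (b + 2) + 2 ≤ 2 * a) :
    (b + 1) * (a + b + 1) * a * (a + b + 3) ≤ (b + 3) * (a + b + 2) * (a - 1) * (a + 1) := by
  have h1 : 0 ≤ a ^ 2 * (2 * a - ((b + 1) * (b + 2) + 2)) :=
    mul_nonneg (by positivity) (by linarith)
  have h2 : 0 ≤ a * (b + 3) * (2 * a - ((b + 1) * (b + 2) + 2)) :=
    mul_nonneg (by positivity) (by linarith)
  have h3 : 0 ≤ (b + 2) * (b + 3) * (a - 1) := mul_nonneg (by positivity) (by linarith)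
  nlinarith

theorem gRat_step_eq (c b : ℕ) :
    gRat (c + 2 + b) (c + 2) 1 - gRat (c + 1 + (b + 2)) (c + 1) 1 =
      (((b : ℚ) + 1) * (c + b + 3) * (c + 2) * (c + b + 5) -
        (b + 3) * (c + b + 4) * (c + 1) * (c + 3)) /
        ((c + b + 5).factorial * (c + 3).factorial) := by
  unfold gRat
  rw [show c + 2 + b + 2 = c + b + 4 by ring, show c + 1 + (b + 2) + 2 = c + b + 5 by ring,
    show c + 2 + 1 = c + 3 by ring, show c + 1 + 1 = c + 2 by ring,
    show (c + b + 5).factorial = (c + b + 5) * (c + b + 4).factorial from rfl,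
    show (c + 3).factorial = (c + 3) * (c + 2).factorial from rfl]
  have hx : ((c + b + 4).factorial : ℚ) ≠ 0 := by exact_mod_cast Nat.factorial_ne_zero _
  have hy : ((c + 2).factorial : ℚ) ≠ 0 := by exact_mod_cast Nat.factorial_ne_zero _
  have h5 : (c : ℚ) + b + 5 ≠ 0 := by positivity
  have h3 : (c : ℚ) + 3 ≠ 0 := by positivity
  push_cast
  simp only [Nat.factorial_one, Nat.cast_one]
  field_simp
  ring

theorem gRat_step_lt (c b : ℕ) (h : 2 * (c + 2) ≤ (b + 1) * (b + 2)) :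
    gRat (c + 1 + (b + 2)) (c + 1) 1 < gRat (c + 2 + b) (c + 2) 1 := by
  rw [← sub_pos, gRat_step_eq]
  have h' : 2 * ((c : ℚ) + 2) ≤ (b + 1) * (b + 2) := by exact_mod_cast h
  have := poly_lt ((c : ℚ) + 2) b (by linarith [(Nat.cast_nonneg c : (0 : ℚ) ≤ c)])
    (Nat.cast_nonneg b) h'
  apply div_pos
  · linarith
  · exact_mod_cast Nat.mul_pos (Nat.factorial_pos _) (Nat.factorial_pos _)

theorem gRat_step_ge (c b : ℕ) (h : (b + 1) * (b + 2) + 2 ≤ 2 * (c + 2)) :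
    gRat (c + 2 + b) (c + 2) 1 ≤ gRat (c + 1 + (b + 2)) (c + 1) 1 := by
  rw [← sub_nonpos, gRat_step_eq]
  have h' : ((b : ℚ) + 1) * (b + 2) + 2 ≤ 2 * ((c : ℚ) + 2) := by exact_mod_cast h
  have := poly_ge ((c : ℚ) + 2) b (by linarith [(Nat.cast_nonneg c : (0 : ℚ) ≤ c)])
    (Nat.cast_nonneg b) h'
  apply div_nonpos_of_nonpos_of_nonneg
  · linarith
  · positivity

/-- Three-row comparison, iterated. -/
theorem gRat_three (k : ℕ) : ∀ c b : ℕ, 2 * (c + k + 1) ≤ (b + 1) * (b + 2) →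
    gRat (c + 1 + (b + 2 * k)) (c + 1) 1 ≤ gRat (c + k + 1 + b) (c + k + 1) 1 := by
  induction k with
  | zero => intro c b _; exact le_rfl
  | succ k ih =>
    intro c b h
    have h1 := ih c (b + 2) (by nlinarith)
    have h2 := gRat_step_lt (c + k) b (by linarith)
    rw [show b + 2 * (k + 1) = b + 2 + 2 * k by ring, show c + (k + 1) + 1 = c + k + 2 by ring]
    exact h1.trans h2.le

theorem gRat_three_lt (k : ℕ) (c b : ℕ) (h : 2 * (c + k + 2) ≤ (b + 1) * (b + 2)) :
    gRat (c + 1 + (b + 2 * k + 2)) (c + 1) 1 < gRat (c + k + 2 + b) (c + k + 2) 1 := by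
  have h1 := gRat_three k c (b + 2) (by nlinarith)
  have h2 := gRat_step_lt (c + k) b (by linarith)
  rw [show b + 2 * k + 2 = b + 2 + 2 * k by ring]
  exact h1.trans_lt h2

theorem gRat_two_eq (c b : ℕ) :
    gRat (c + 1 + b) (c + 1) 1 - gRat (c + 1 + b + 1) (c + 1) 0 =
      (((b : ℚ) + 1) * (c + b + 2) * (c + 1) - (b + 2) * (c + 2)) /
        ((c + b + 3).factorial * (c + 2).factorial) := by
  unfold gRat
  rw [show c + 1 + b + 2 = c + b + 3 by ring, show c + 1 + b + 1 + 2 = c + b + 4 by ring,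
    show c + 1 + 1 = c + 2 by ring,
    show (c + b + 4).factorial = (c + b + 4) * (c + b + 3).factorial from rfl]
  have hx : ((c + b + 3).factorial : ℚ) ≠ 0 := by exact_mod_cast Nat.factorial_ne_zero _
  have hy : ((c + 2).factorial : ℚ) ≠ 0 := by exact_mod_cast Nat.factorial_ne_zero _
  have h4 : (c : ℚ) + b + 4 ≠ 0 := by positivity
  push_cast
  simp only [Nat.factorial_one, Nat.factorial_zero, Nat.cast_one]
  field_simp
  ring

theorem gRat_two_le (c b : ℕ) (hb : 1 ≤ b) :
    gRat (c + 1 + b + 1) (c + 1) 0 ≤ gRat (c + 1 + b) (c + 1) 1 := by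
  rw [← sub_nonneg, gRat_two_eq]
  apply div_nonneg _ (by positivity)
  have hb' : (1 : ℚ) ≤ b := by exact_mod_cast hb
  have hc' : (0 : ℚ) ≤ c := Nat.cast_nonneg c
  obtain ⟨d, hd⟩ : ∃ d : ℚ, (b : ℚ) = d + 1 := ⟨b - 1, by ring⟩
  rw [hd]
  have : 0 ≤ d := by linarith
  have e : (d + 1 + 1) * (c + (d + 1) + 2) * ((c : ℚ) + 1) - (d + 1 + 2) * (c + 2) =
    c * d ^ 2 + d ^ 2 + c ^ 2 * d + 5 * c * d + 3 * d + 2 * c ^ 2 + 5 * c := by ring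
  rw [e]
  positivity

theorem gRat_two_lt (c b : ℕ) (hb : 1 ≤ b) :
    gRat (c + 2 + b + 1) (c + 2) 0 < gRat (c + 2 + b) (c + 2) 1 := by
  rw [← sub_pos, gRat_two_eq (c + 1) b]
  apply div_pos _ (by exact_mod_cast Nat.mul_pos (Nat.factorial_pos _) (Nat.factorial_pos _))
  have hb' : (1 : ℚ) ≤ b := by exact_mod_cast hb
  have hc' : (0 : ℚ) ≤ c := Nat.cast_nonneg c
  obtain ⟨d, hd⟩ : ∃ d : ℚ, (b : ℚ) = d + 1 := ⟨b - 1, by ring⟩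
  rw [hd]
  have : 0 ≤ d := by linarith
  push_cast
  have e : (d + 1 + 1) * ((c : ℚ) + 1 + (d + 1) + 2) * ((c : ℚ) + 1 + 1)
      - (d + 1 + 2) * (c + 1 + 2) =
    (c + 1) * d ^ 2 + d ^ 2 + (c + 1) ^ 2 * d + 5 * (c + 1) * d + 3 * d + 2 * (c + 1) ^ 2
      + 5 * (c + 1) := by ring
  rw [e]
  positivity

theorem gRat_one_lt (m : ℕ) : gRat (m + 3) 0 0 < gRat (m + 2) 1 0 := by
  have h : gRat (m + 2) 1 0 - gRat (m + 3) 0 0 = ((m : ℚ) + 1) / (m + 3).factorial := by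
    unfold gRat
    rw [show m + 2 + 2 = m + 4 by ring, show m + 3 + 2 = m + 5 by ring,
      show (m + 5).factorial = (m + 5) * ((m + 4) * (m + 3).factorial) from rfl,
      show (m + 4).factorial = (m + 4) * (m + 3).factorial from rfl]
    have hx : ((m + 3).factorial : ℚ) ≠ 0 := by exact_mod_cast Nat.factorial_ne_zero _
    have h5 : (m : ℚ) + 5 ≠ 0 := by positivity
    have h4 : (m : ℚ) + 4 ≠ 0 := by positivity
    push_cast
    norm_num [Nat.factorial]
    field_simp
    ring
  rw [← sub_pos, h]
  apply div_pos (by positivity)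
  exact_mod_cast Nat.factorial_pos _

theorem gRat_mid_lt (a b : ℕ) (ha : 2 ≤ a) : gRat (a + b) (a + 1) 0 < gRat (a + b) a 1 := by
  have h : gRat (a + b) a 1 - gRat (a + b) (a + 1) 0 =
      (((b : ℚ) + 1) * (a + b + 1) * a - b * (a + b + 2)) /
        ((a + b + 2).factorial * (a + 1).factorial) := by
    unfold gRat
    rw [show a + 1 + 1 = a + 2 by ring,
      show (a + 2).factorial = (a + 2) * (a + 1).factorial from rfl]
    have hx : ((a + b + 2).factorial : ℚ) ≠ 0 := by exact_mod_cast Nat.factorial_ne_zero _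
    have hy : ((a + 1).factorial : ℚ) ≠ 0 := by exact_mod_cast Nat.factorial_ne_zero _
    have h2 : (a : ℚ) + 2 ≠ 0 := by positivity
    push_cast
    simp only [Nat.factorial_one, Nat.factorial_zero, Nat.cast_one]
    field_simp
    ring
  rw [← sub_pos, h]
  apply div_pos _ (by exact_mod_cast Nat.mul_pos (Nat.factorial_pos _) (Nat.factorial_pos _))
  obtain ⟨c, rfl⟩ : ∃ c, a = c + 2 := ⟨a - 2, by omega⟩
  push_cast
  have e : ((b : ℚ) + 1) * (c + 2 + b + 1) * (c + 2) - b * (c + 2 + b + 2) =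
    c ^ 2 * b + c * b ^ 2 + 5 * c * b + b ^ 2 + 4 * b + c ^ 2 + 5 * c + 6 := by ring
  rw [e]
  positivity

/-- All shapes strictly dominating `(a+b,a,1)` have fewer tableaux when `2a ≤ (b+1)(b+2)`. -/
theorem gRat_all (a b x y z : ℕ) (ha : 2 ≤ a) (h : 2 * a ≤ (b + 1) * (b + 2))
    (hz : z ≤ 1) (hzy : z ≤ y) (hn : x + y + z = 2 * a + b + 1) (hx : a + b ≤ x)
    (hne : ¬ (x = a + b ∧ y = a ∧ z = 1)) : gRat x y z < gRat (a + b) a 1 := by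
  have hb : 1 ≤ b := by
    by_contra hb
    obtain rfl : b = 0 := by omega
    omega
  have hthree : ∀ y', 1 ≤ y' → y' < a → gRat (2 * a + b - y') y' 1 < gRat (a + b) a 1 := by
    intro y' h1 h2
    obtain ⟨c, rfl⟩ : ∃ c, y' = c + 1 := ⟨y' - 1, by omega⟩
    obtain ⟨k, rfl⟩ : ∃ k, a = c + k + 2 := ⟨a - c - 2, by omega⟩
    have := gRat_three_lt k c b h
    convert this using 2
    omega
  have htwo : ∀ y', 1 ≤ y' → y' ≤ a → gRat (2 * a + b + 1 - y') y' 0 < gRat (a + b) a 1 := by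
    intro y' h1 h2
    rcases h2.eq_or_lt with rfl | h2
    · obtain ⟨c, rfl⟩ : ∃ c, y' = c + 2 := ⟨y' - 2, by omega⟩
      have := gRat_two_lt c b hb
      convert this using 2
      omega
    · refine lt_of_le_of_lt ?_ (hthree y' h1 h2)
      obtain ⟨c, rfl⟩ : ∃ c, y' = c + 1 := ⟨y' - 1, by omega⟩
      have := gRat_two_le c (2 * a + b - 2 * (c + 1)) (by omega)
      rw [show 2 * a + b + 1 - (c + 1) = c + 1 + (2 * a + b - 2 * (c + 1)) + 1 by omega,
        show 2 * a + b - (c + 1) = c + 1 + (2 * a + b - 2 * (c + 1)) by omega]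
      exact this
  rcases Nat.le_one_iff_eq_zero_or_eq_one.1 hz with rfl | rfl
  · rcases Nat.eq_zero_or_pos y with rfl | hy
    · refine lt_trans ?_ (htwo 1 le_rfl (by omega))
      have := gRat_one_lt (2 * a + b - 2)
      rw [show x = 2 * a + b - 2 + 3 by omega,
        show 2 * a + b + 1 - 1 = 2 * a + b - 2 + 2 by omega]
      exact this
    · by_cases hya : y = a + 1
      · rw [show x = a + b by omega, hya]
        exact gRat_mid_lt a b ha
      have := htwo y hy (by omega)
      convert this using 2
      omega
  · have := hthree y hzy (by omega)
    convert this using 2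
    omega

theorem fSYT_base (a b : ℕ) (ha : 1 ≤ a) :
    (fSYT [a + b, a, 1] : ℚ) = (2 * a + b + 1).factorial * gRat (a + b) a 1 := by
  rw [fSYT_formula [a + b, a, 1] (a + b) a 1 (by omega) ha]
  · rw [show a + b + a + 1 = 2 * a + b + 1 by ring]
  · intro i
    match i with
    | 0 => rfl
    | 1 => rfl
    | 2 => rfl
    | _ + 3 => simp [shape3]
  · simp; ring

theorem not_le_of_shape (a b x y z : ℕ) (m : List ℕ) (ha : 2 ≤ a)
    (h : 2 * a ≤ (b + 1) * (b + 2)) (hl : ∀ i, m.getD i 0 = shape3 x y z i)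
    (hs : m.sum = x + y + z)
    (hz : z ≤ 1) (hzy : z ≤ y) (hyx : y ≤ x) (hn : x + y + z = 2 * a + b + 1) (hx : a + b ≤ x)
    (hne : ¬ (x = a + b ∧ y = a ∧ z = 1)) : fSYT m < fSYT [a + b, a, 1] := by
  have h1 := fSYT_formula m x y z hyx hzy hl hs
  have h2 := fSYT_base a b (by omega)
  have h3 := gRat_all a b x y z ha h hz hzy hn hx hne
  rw [hn] at h1
  have : (fSYT m : ℚ) < fSYT [a + b, a, 1] := by
    rw [h1, h2]
    apply mul_lt_mul_of_pos_left h3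
    exact_mod_cast Nat.factorial_pos _
  exact_mod_cast this

/-- `(a+b, a, 1)` is maximal in the standard immersion poset on
partitions of `2a+b+1` if and only if `a ≤ (b+1)(b+2)/2`. -/
theorem std_maximal_three_row_one (a b : ℕ) (ha : 2 ≤ a) :
    StdMaximal (2 * a + b + 1) [a + b, a, 1] ↔ a ≤ (b + 1) * (b + 2) / 2 := by
  rw [Nat.le_div_iff_mul_le (by norm_num), mul_comm a 2]
  constructor
  · intro hmax
    by_contra hcon
    have hpar : (b + 1) * (b + 2) % 2 = 0 := Nat.even_iff.1 (Nat.even_mul_succ_self (b + 1))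
    have hge : (b + 1) * (b + 2) + 2 ≤ 2 * a := by omega
    obtain ⟨c, rfl⟩ : ∃ c, a = c + 2 := ⟨a - 2, by omega⟩
    apply hmax [c + 1 + (b + 2), c + 1, 1]
    · refine ⟨?_, ?_, ?_⟩
      · simp
        omega
      · simp
      · simp
        ring
    · simp
    · constructor
      · intro k
        match k with
        | 0 => simp
        | 1 => simp; omega
        | 2 => simp; omega
        | k + 3 => simp; omega
      · have h1 := fSYT_base (c + 1) (b + 2) (by omega)
        have h2 := fSYT_base (c + 2) b (by omega)
        have h3 := gRat_step_ge c b hge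
        rw [show 2 * (c + 1) + (b + 2) + 1 = 2 * (c + 2) + b + 1 by ring] at h1
        have : (fSYT [c + 2 + b, c + 2, 1] : ℚ) ≤ fSYT [c + 1 + (b + 2), c + 1, 1] := by
          rw [h1, h2]
          exact mul_le_mul_of_nonneg_left h3 (by positivity)
        exact_mod_cast this
  · rintro h m ⟨hp, hpos, hsum⟩ hne ⟨hdom, hf⟩
    apply absurd hf
    rw [not_le]
    have d1 := hdom 1
    have d2 := hdom 2
    have d3 := hdom 3
    match m, hp, hpos, hsum, hne, d1, d2, d3 with
    | [], _, _, hsum, _, _, _, _ => simp at hsum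
    | [x], _, _, hsum, _, d1, d2, d3 =>
      simp at hsum d1 d2 d3
      refine not_le_of_shape a b x 0 0 [x] ha h ?_ ?_ ?_ ?_ ?_ ?_ ?_ ?_ <;> try omega
      · intro i
        match i with
        | 0 => rfl
        | 1 => rfl
        | 2 => rfl
        | _ + 3 => simp [shape3]
      · simp
    | [x, y], hp, _, hsum, _, d1, d2, d3 =>
      simp at hsum d1 d2 d3 hp
      refine not_le_of_shape a b x y 0 [x, y] ha h ?_ ?_ ?_ ?_ ?_ ?_ ?_ ?_ <;> try omega
      · intro i
        match i with
        | 0 => rfl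
        | 1 => rfl
        | 2 => rfl
        | _ + 3 => simp [shape3]
      · simp
    | [x, y, z], hp, hpos, hsum, hne, d1, d2, d3 =>
      simp at hsum d1 d2 d3 hp hpos hne
      refine not_le_of_shape a b x y z [x, y, z] ha h ?_ ?_ ?_ ?_ ?_ ?_ ?_ ?_ <;> try omega
      · intro i
        match i with
        | 0 => rfl
        | 1 => rfl
        | 2 => rfl
        | _ + 3 => simp [shape3]
      · simp; omega
    | x :: y :: z :: w :: t, _, hpos, hsum, _, _, _, d3 =>
      have hw := hpos w (by simp)
      simp at hsum d3
      omega
end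

section
/- Let a ≥ 3 and b ≥ 0. The partition (a+b, a, 2) is a maximal element in the standard immersion poset on partitions of 2a+b+2 if and only if a ≤ (b+1)(b+2)/2. -/
open Finset MvPolynomial

def SYr (r : ℕ → ℕ) (n : ℕ) : Set (ℕ → ℕ → ℕ) :=
  {T | (∀ i j1 j2, j1 ≤ j2 → j2 < r i → T i j1 ≤ T i j2) ∧
    (∀ i1 i2 j, i1 < i2 → j < r i2 → T i1 j < T i2 j) ∧
    (∀ i j, r i ≤ j → T i j = 0) ∧
    (∀ i j, j < r i → T i j < n) ∧
    (∀ k, k < n → ∃ i j, j < r i ∧ T i j = k) ∧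
    (∀ i j i' j', j < r i → j' < r i' → T i j = T i' j' → i = i' ∧ j = j')}

def extT (i p n : ℕ) (T : ℕ → ℕ → ℕ) : ℕ → ℕ → ℕ :=
  fun i' j' => if i' = i ∧ j' = p then n else T i' j'

def rem (r : ℕ → ℕ) (i : ℕ) : ℕ → ℕ := fun i' => if i' = i then r i - 1 else r i'

def SYc (r : ℕ → ℕ) (n i : ℕ) : Set (ℕ → ℕ → ℕ) :=
  {T | T ∈ SYr r (n + 1) ∧ 0 < r i ∧ T i (r i - 1) = n}

lemma SYc_corner (r : ℕ → ℕ) (n i : ℕ) (T : ℕ → ℕ → ℕ) (h : T ∈ SYc r n i) :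
    r (i + 1) < r i := by
  obtain ⟨⟨hA, hB, hC, hD, hE, hU⟩, h0, h1⟩ := h
  by_contra hc
  have h2 := hB i (i + 1) (r i - 1) (by omega) (by omega)
  have h3 := hD (i + 1) (r i - 1) (by omega)
  omega

lemma SYr_union (r : ℕ → ℕ) (n : ℕ) (T : ℕ → ℕ → ℕ) (h : T ∈ SYr r (n + 1)) :
    ∃ i, T ∈ SYc r n i := by
  obtain ⟨hA, hB, hC, hD, hE, hU⟩ := id h
  obtain ⟨i, j, hj, hT⟩ := hE n (by omega)
  refine ⟨i, h, by omega, ?_⟩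
  have h1 := hA i j (r i - 1) (by omega) (by omega)
  have h2 := hD i (r i - 1) (by omega)
  omega

lemma SYc_disj (r : ℕ → ℕ) (n i i' : ℕ) (hii : i ≠ i') : Disjoint (SYc r n i) (SYc r n i') := by
  rw [Set.disjoint_left]
  rintro T ⟨⟨hA, hB, hC, hD, hE, hU⟩, h0, h1⟩ ⟨_, h0', h1'⟩
  exact hii (hU i (r i - 1) i' (r i' - 1) (by omega) (by omega) (by omega)).1

lemma SYc_image (r : ℕ → ℕ) (n i : ℕ) (hr : Antitone r) (hc : r (i + 1) < r i) :
    SYc r n i = Set.image (extT i (r i - 1) n) (SYr (rem r i) n) := by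
  have hrl : ∀ i', rem r i i' ≤ r i' := by
    intro i'; unfold rem; split_ifs with h
    · subst h; omega
    · exact le_rfl
  have hri : rem r i i = r i - 1 := by simp [rem]
  have hrn : ∀ i', i' ≠ i → rem r i i' = r i' := by intro i' h; simp [rem, h]
  have hin : ∀ i' j', j' < r i' → ¬ (i' = i ∧ j' = r i - 1) → j' < rem r i i' := by
    intro i' j' h1 h2
    by_cases h : i' = i
    · subst h; rw [hri]; have : j' ≠ r i' - 1 := fun hh => h2 ⟨rfl, hh⟩
      omega
    · rw [hrn i' h]; exact h1
  have hnin : ∀ i' j', j' < rem r i i' → ¬ (i' = i ∧ j' = r i - 1) := by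
    rintro i' j' h1 ⟨rfl, rfl⟩
    rw [hri] at h1; omega
  ext T
  constructor
  · rintro ⟨⟨hA, hB, hC, hD, hE, hU⟩, h0, h1⟩
    refine ⟨extT i (r i - 1) 0 T, ⟨?_, ?_, ?_, ?_, ?_, ?_⟩, ?_⟩
    · intro i' j1 j2 h12 h2
      have e1 := hnin i' j1 (by omega)
      have e2 := hnin i' j2 h2
      simp only [extT, e1, e2, if_false]
      exact hA _ _ _ h12 (lt_of_lt_of_le h2 (hrl _))
    · intro i1 i2 j h12 h2
      have e2 := hnin i2 j h2
      have e1 : ¬ (i1 = i ∧ j = r i - 1) := by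
        rintro ⟨rfl, rfl⟩
        have := hr (show i1 + 1 ≤ i2 by omega)
        have := hrl i2
        omega
      simp only [extT, e1, e2, if_false]
      exact hB _ _ _ h12 (lt_of_lt_of_le h2 (hrl _))
    · intro i' j h
      simp only [extT]
      split_ifs with e
      · rfl
      · apply hC
        by_contra hh
        have := hin i' j (by omega) e
        omega
    · intro i' j h
      have e := hnin i' j h
      simp only [extT, e, if_false]
      have h2 := hD i' j (lt_of_lt_of_le h (hrl _))
      rcases Nat.lt_succ_iff_lt_or_eq.1 h2 with h3 | h3
      · exact h3
      · exact absurd (hU i' j i (r i - 1) (lt_of_lt_of_le h (hrl _)) (by omega) (by omega)) e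
    · intro k hk
      obtain ⟨i', j, hj, hT⟩ := hE k (by omega)
      have e : ¬ (i' = i ∧ j = r i - 1) := by
        rintro ⟨rfl, rfl⟩; omega
      exact ⟨i', j, hin _ _ hj e, by simp only [extT, e, if_false, hT]⟩
    · intro i1 j1 i2 j2 h1 h2 h
      have e1 := hnin i1 j1 h1
      have e2 := hnin i2 j2 h2
      simp only [extT, e1, e2, if_false] at h
      exact hU _ _ _ _ (lt_of_lt_of_le h1 (hrl _)) (lt_of_lt_of_le h2 (hrl _)) h
    · funext i' j
      simp only [extT]
      split_ifs with e
      · rw [e.1, e.2, h1]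
      · rfl
  · rintro ⟨T, ⟨hA, hB, hC, hD, hE, hU⟩, rfl⟩
    have hD' : ∀ i' j, T i' j ≤ n := by
      intro i' j
      by_cases h : j < rem r i i'
      · exact (hD _ _ h).le
      · rw [hC _ _ (by omega)]; omega
    refine ⟨⟨?_, ?_, ?_, ?_, ?_, ?_⟩, by omega, by simp [extT]⟩
    · intro i' j1 j2 h12 h2
      by_cases e2 : i' = i ∧ j2 = r i - 1
      · simp only [extT, e2, and_self, if_true]
        split_ifs
        · exact le_rfl
        · exact hD' _ _
      · have h3 := hin _ _ h2 e2
        have e1 := hnin i' j1 (by omega)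
        simp only [extT, e1, e2, if_false]
        exact hA _ _ _ h12 h3
    · intro i1 i2 j h12 h2
      have e1 : ¬ (i1 = i ∧ j = r i - 1) := by
        rintro ⟨rfl, rfl⟩
        have := hr (show i1 + 1 ≤ i2 by omega)
        omega
      have hj1 : j < r i1 := lt_of_lt_of_le h2 (hr h12.le)
      by_cases e2 : i2 = i ∧ j = r i - 1
      · simp only [extT, e2, and_self, if_true]
        rw [if_neg (by omega), ← e2.2]
        exact hD _ _ (hin _ _ hj1 e1)
      · simp only [extT, e1, e2, if_false]
        exact hB _ _ _ h12 (hin _ _ h2 e2)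
    · intro i' j h
      have e : ¬ (i' = i ∧ j = r i - 1) := by
        rintro ⟨rfl, rfl⟩; omega
      simp only [extT, e, if_false]
      exact hC _ _ (le_trans (hrl _) h)
    · intro i' j h
      simp only [extT]
      split_ifs
      · omega
      · have := hD' i' j; omega
    · intro k hk
      by_cases hkn : k = n
      · exact ⟨i, r i - 1, by omega, by simp [extT, hkn]⟩
      · obtain ⟨i', j, hj, hT⟩ := hE k (by omega)
        exact ⟨i', j, lt_of_lt_of_le hj (hrl _), by simp only [extT, hnin _ _ hj, if_false, hT]⟩
    · intro i1 j1 i2 j2 h1 h2 h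
      by_cases e1 : i1 = i ∧ j1 = r i - 1
      · by_cases e2 : i2 = i ∧ j2 = r i - 1
        · omega
        · rw [extT, extT, if_pos e1, if_neg e2] at h
          have := hD _ _ (hin _ _ h2 e2)
          omega
      · by_cases e2 : i2 = i ∧ j2 = r i - 1
        · rw [extT, extT, if_neg e1, if_pos e2] at h
          have := hD _ _ (hin _ _ h1 e1)
          omega
        · rw [extT, extT, if_neg e1, if_neg e2] at h
          exact hU _ _ _ _ (hin _ _ h1 e1) (hin _ _ h2 e2) h

lemma SYc_encard (r : ℕ → ℕ) (n i : ℕ) (hr : Antitone r) (hc : r (i + 1) < r i) :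
    (SYc r n i).encard = (SYr (rem r i) n).encard := by
  rw [SYc_image r n i hr hc]
  apply Set.InjOn.encard_image
  intro T hT T' hT' h
  funext i' j
  have h2 := congrFun (congrFun h i') j
  by_cases e : i' = i ∧ j = r i - 1
  · obtain ⟨rfl, rfl⟩ := e
    rw [hT.2.2.1 _ _ (by simp [rem]), hT'.2.2.1 _ _ (by simp [rem])]
  · simpa only [extT, e, if_false] using h2

def sh (x y z : ℕ) : ℕ → ℕ := fun i => [x, y, z].getD i 0

lemma sh_ge (x y z i : ℕ) : sh x y z (i + 3) = 0 := by simp [sh]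

lemma sh_anti (x y z : ℕ) (h1 : y ≤ x) (h2 : z ≤ y) : Antitone (sh x y z) := by
  apply antitone_nat_of_succ_le
  intro i
  rcases i with _ | _ | _ | i
  · simpa [sh]
  · simpa [sh]
  · simp [sh]
  · simp [sh]

lemma SYr_zero : (SYr (sh 0 0 0) 0).encard = 1 := by
  have hz : ∀ i, sh 0 0 0 i = 0 := by
    intro i
    rcases i with _ | _ | _ | i <;> simp [sh]
  rw [Set.encard_eq_one]
  refine ⟨fun _ _ => 0, ?_⟩
  ext T
  simp only [Set.mem_singleton_iff]
  constructor
  · rintro ⟨hA, hB, hC, hD, hE, hU⟩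
    funext i j
    exact hC _ _ (by rw [hz]; omega)
  · rintro rfl
    refine ⟨?_, ?_, ?_, ?_, ?_, ?_⟩ <;> simp [hz]

lemma SYr_split (x y z n : ℕ) : (SYr (sh x y z) (n + 1)).encard =
    (SYc (sh x y z) n 0).encard + (SYc (sh x y z) n 1).encard + (SYc (sh x y z) n 2).encard := by
  rw [← Set.encard_union_eq (SYc_disj _ _ _ _ (by omega)), ← Set.encard_union_eq]
  · congr 1
    ext T
    constructor
    · intro h
      obtain ⟨i, hi⟩ := SYr_union _ _ _ h
      rcases i with _ | _ | _ | i
      · exact Or.inl (Or.inl hi)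
      · exact Or.inl (Or.inr hi)
      · exact Or.inr hi
      · have := hi.2.1
        rw [show i + 1 + 1 + 1 = i + 3 by rfl, sh_ge] at this
        omega
    · rintro ((h | h) | h) <;> exact h.1
  · rw [Set.disjoint_union_left]
    exact ⟨SYc_disj _ _ _ _ (by omega), SYc_disj _ _ _ _ (by omega)⟩

lemma SYc_empty (r : ℕ → ℕ) (n i : ℕ) (hc : ¬ r (i + 1) < r i) : (SYc r n i).encard = 0 := by
  rw [Set.encard_eq_zero, Set.eq_empty_iff_forall_notMem]
  intro T h
  exact hc (SYc_corner _ _ _ _ h)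

open Nat in
lemma hook (n : ℕ) : ∀ x y z : ℕ, y ≤ x → z ≤ y → x + y + z = n →
    ∃ N : ℕ, (SYr (sh x y z) n).encard = N ∧
      (N : ℤ) * ((x + 2)! * (y + 1)! * z !) =
        n ! * (((x : ℤ) - y + 1) * (x - z + 2) * (y - z + 1)) := by
  induction n with
  | zero =>
    intro x y z h1 h2 h3
    obtain ⟨rfl, rfl, rfl⟩ : x = 0 ∧ y = 0 ∧ z = 0 := by omega
    exact ⟨1, by rw [SYr_zero]; rfl, by simp⟩
  | succ n ih =>
    intro x y z h1 h2 h3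
    have hr := sh_anti x y z h1 h2
    have H0 : ∃ N : ℕ, (SYc (sh x y z) n 0).encard = N ∧
      (N : ℤ) * ((x + 2)! * (y + 1)! * z !) =
        n ! * ((x + 2) * (((x : ℤ) - y) * (x - z + 1) * (y - z + 1))) := by
      by_cases hc : y < x
      · obtain ⟨x, rfl⟩ : ∃ x', x = x' + 1 := ⟨x - 1, by omega⟩
        obtain ⟨N, hN, hN'⟩ := ih x y z (by omega) h2 (by omega)
        refine ⟨N, ?_, ?_⟩
        · rw [SYc_encard _ _ _ hr (by simpa [sh] using hc), ← hN]
          congr 2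
          funext i
          rcases i with _ | _ | _ | i <;> simp [sh, rem]
        · rw [show (x + 1 + 2)! = (x + 3) * (x + 2)! from Nat.factorial_succ (x + 2)]
          push_cast
          linear_combination (x + 3 : ℤ) * hN'
      · refine ⟨0, by rw [SYc_empty]; rfl; simpa [sh] using hc, ?_⟩
        obtain rfl : x = y := by omega
        simp
    have H1 : ∃ N : ℕ, (SYc (sh x y z) n 1).encard = N ∧
      (N : ℤ) * ((x + 2)! * (y + 1)! * z !) =
        n ! * ((y + 1) * (((x : ℤ) - y + 2) * (x - z + 2) * (y - z))) := by
      by_cases hc : z < y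
      · obtain ⟨y, rfl⟩ : ∃ x', y = x' + 1 := ⟨y - 1, by omega⟩
        obtain ⟨N, hN, hN'⟩ := ih x y z (by omega) (by omega) (by omega)
        refine ⟨N, ?_, ?_⟩
        · rw [SYc_encard _ _ _ hr (by simpa [sh] using hc), ← hN]
          congr 2
          funext i
          rcases i with _ | _ | _ | i <;> simp [sh, rem]
        · rw [show (y + 1 + 1)! = (y + 2) * (y + 1)! from Nat.factorial_succ (y + 1)]
          push_cast
          linear_combination (y + 2 : ℤ) * hN'
      · refine ⟨0, by rw [SYc_empty]; rfl; simpa [sh] using hc, ?_⟩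
        obtain rfl : y = z := by omega
        simp
    have H2 : ∃ N : ℕ, (SYc (sh x y z) n 2).encard = N ∧
      (N : ℤ) * ((x + 2)! * (y + 1)! * z !) =
        n ! * (z * (((x : ℤ) - y + 1) * (x - z + 3) * (y - z + 2))) := by
      by_cases hc : 0 < z
      · obtain ⟨z, rfl⟩ : ∃ x', z = x' + 1 := ⟨z - 1, by omega⟩
        obtain ⟨N, hN, hN'⟩ := ih x y z (by omega) (by omega) (by omega)
        refine ⟨N, ?_, ?_⟩
        · rw [SYc_encard _ _ _ hr (by simp [sh]), ← hN]
          congr 2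
          funext i
          rcases i with _ | _ | _ | i <;> simp [sh, rem]
        · rw [show (z + 1)! = (z + 1) * (z)! from Nat.factorial_succ (z)]
          push_cast
          linear_combination (z + 1 : ℤ) * hN'
      · refine ⟨0, by rw [SYc_empty]; rfl; simpa [sh] using hc, ?_⟩
        obtain rfl : z = 0 := by omega
        simp
    obtain ⟨N0, h0, h0'⟩ := H0
    obtain ⟨N1, h1, h1'⟩ := H1
    obtain ⟨N2, h2, h2'⟩ := H2
    refine ⟨N0 + N1 + N2, ?_, ?_⟩
    · rw [SYr_split, h0, h1, h2]; push_cast; rfl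
    · rw [Nat.factorial_succ n]
      push_cast
      have h4 : (n : ℤ) = x + y + z - 1 := by omega
      rw [h4]
      linear_combination h0' + h1' + h2'

lemma kostka_SYr (l : List ℕ) (n : ℕ) :
    kostka l (List.replicate n 1) = (SYr (fun i => l.getD i 0) n).ncard := by
  unfold kostka
  rw [← Nat.card_coe_set_eq]
  apply Nat.card_congr
  apply Equiv.subtypeEquivRight
  intro T
  have hfin : ∀ k, Finite {c : ℕ × ℕ // c.2 < l.getD c.1 0 ∧ T c.1 c.2 = k} := by
    intro k
    have : {c : ℕ × ℕ | c.2 < l.getD c.1 0 ∧ T c.1 c.2 = k} ⊆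
        ((Finset.range l.length) ×ˢ (Finset.range (l.sum + 1)) : Finset (ℕ × ℕ)) := by
      rintro ⟨i, j⟩ ⟨h, _⟩
      simp only [Finset.coe_product, Set.mem_prod, Finset.mem_coe, Finset.mem_range]
      simp only at h
      have hi : i < l.length := by
        by_contra hi
        rw [List.getD_eq_default _ _ (by omega)] at h
        omega
      refine ⟨hi, ?_⟩
      rw [List.getD_eq_getElem _ _ hi] at h
      have := List.le_sum_of_mem (List.getElem_mem hi)
      omega
    exact (Set.Finite.subset (Finset.finite_toSet _) this).to_subtype
  have hrep : ∀ k, (List.replicate n 1).getD k 0 = if k < n then 1 else 0 := by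
    intro k
    split_ifs with h
    · rw [List.getD_eq_getElem _ _ (by simpa using h)]; simp
    · rw [List.getD_eq_default _ _ (by simpa using h)]
  constructor
  · rintro ⟨⟨hA, hB, hC⟩, hc⟩
    have hD : ∀ i j, j < l.getD i 0 → T i j < n := by
      intro i j h
      by_contra hn
      have h1 := hc (T i j)
      rw [hrep, if_neg hn, Nat.card_eq_zero] at h1
      rcases h1 with h1 | h1
      · exact h1.false ⟨(i, j), h, rfl⟩
      · exact h1.not_finite (hfin _)
    refine ⟨hA, hB, hC, hD, ?_, ?_⟩
    · intro k hk
      have h1 := hc k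
      rw [hrep, if_pos hk, Nat.card_eq_one_iff_unique] at h1
      obtain ⟨⟨i, j⟩, h, h'⟩ := h1.2
      exact ⟨i, j, h, h'⟩
    · intro i j i' j' h h' he
      have h1 := hc (T i j)
      rw [hrep, if_pos (hD i j h), Nat.card_eq_one_iff_unique] at h1
      have := h1.1.elim ⟨(i, j), h, rfl⟩ ⟨(i', j'), h', he.symm⟩
      simpa using this
  · rintro ⟨hA, hB, hC, hD, hE, hU⟩
    refine ⟨⟨hA, hB, hC⟩, ?_⟩
    intro k
    rw [hrep]
    split_ifs with hk
    · rw [Nat.card_eq_one_iff_unique]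
      obtain ⟨i, j, h, h'⟩ := hE k hk
      refine ⟨⟨?_⟩, ⟨⟨(i, j), h, h'⟩⟩⟩
      rintro ⟨⟨i1, j1⟩, h1, h1'⟩ ⟨⟨i2, j2⟩, h2, h2'⟩
      have := hU i1 j1 i2 j2 h1 h2 (h1'.trans h2'.symm)
      simpa using this
    · rw [Nat.card_eq_zero]
      left
      refine ⟨?_⟩
      rintro ⟨⟨i, j⟩, h, h'⟩
      have := hD i j h
      simp only at h'
      omega

open Nat in
noncomputable def hk (x y z : ℕ) : ℚ :=
  (x + y + z)! * (((x : ℚ) - y + 1) * (x - z + 2) * (y - z + 1)) / ((x + 2)! * (y + 1)! * z !)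

open Nat in
lemma fSYT_eq (l : List ℕ) (x y z : ℕ) (hl : ∀ i, l.getD i 0 = sh x y z i)
    (hs : l.sum = x + y + z) (h1 : y ≤ x) (h2 : z ≤ y) : (fSYT l : ℚ) = hk x y z := by
  obtain ⟨N, hN, hN'⟩ := hook _ x y z h1 h2 rfl
  have e : (fun i => l.getD i 0) = sh x y z := funext hl
  have : fSYT l = N := by
    rw [fSYT, kostka_SYr, e, hs, Set.ncard, hN]; rfl
  rw [this, hk, eq_div_iff (by positivity)]
  exact_mod_cast hN'

open Nat in
lemma c2_expand (x y : ℕ) :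
    hk (x + 1) y 2 = (x + y + 3)! / ((x + 2)! * (y + 1)! * 2) *
      ((((x : ℚ) - y + 2) * (x + 1) * (y - 1)) / (x + 3)) ∧
    hk x (y + 1) 2 = (x + y + 3)! / ((x + 2)! * (y + 1)! * 2) *
      ((((x : ℚ) - y) * x * y) / (y + 2)) := by
  unfold hk
  rw [show x + 1 + y + 2 = x + y + 3 by ring, show x + (y + 1) + 2 = x + y + 3 by ring,
    show (x + 1 + 2)! = (x + 3) * (x + 2)! from Nat.factorial_succ (x + 2),
    show (y + 1 + 1)! = (y + 2) * (y + 1)! from Nat.factorial_succ (y + 1)]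
  have h1 : ((x + 2)! : ℚ) ≠ 0 := by positivity
  have h2 : ((y + 1)! : ℚ) ≠ 0 := by positivity
  have h3 : (x + 3 : ℚ) ≠ 0 := by positivity
  have h4 : (y + 2 : ℚ) ≠ 0 := by positivity
  constructor
  · push_cast; field_simp; norm_num; ring
  · push_cast; field_simp; norm_num; ring

lemma c2_lt (y b : ℕ) (hy : 2 ≤ y) (hc : 2 * (y + 1) ≤ (b + 1) * (b + 2)) :
    hk (y + 1 + b + 1) y 2 < hk (y + 1 + b) (y + 1) 2 := by
  obtain ⟨e1, e2⟩ := c2_expand (y + 1 + b) y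
  rw [e1, e2]
  apply mul_lt_mul_of_pos_left _ (by positivity)
  rw [div_lt_div_iff₀ (by positivity) (by positivity)]
  have hy' : (2 : ℚ) ≤ y := by exact_mod_cast hy
  have hb : (0 : ℚ) ≤ b := by positivity
  have hc' : (2 : ℚ) * (y + 1) ≤ (b + 1) * (b + 2) := by exact_mod_cast hc
  have hp : (0 : ℚ) ≤ (y + 1) ^ 2 + b * (y + 1) - b - 3 := by nlinarith
  have := mul_nonneg (sub_nonneg.2 hc') hp
  have h2 : (0 : ℚ) < (b + 1) * (b + 3) := by positivity
  push_cast
  nlinarith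

lemma c2_ge (y b : ℕ) (hy : 2 ≤ y) (hc : (b + 1) * (b + 2) + 2 ≤ 2 * (y + 1)) :
    hk (y + 1 + b) (y + 1) 2 ≤ hk (y + 1 + b + 1) y 2 := by
  obtain ⟨e1, e2⟩ := c2_expand (y + 1 + b) y
  rw [e1, e2]
  apply mul_le_mul_of_nonneg_left _ (by positivity)
  rw [div_le_div_iff₀ (by positivity) (by positivity)]
  have hy' : (2 : ℚ) ≤ y := by exact_mod_cast hy
  have hb : (0 : ℚ) ≤ b := by positivity
  have hc' : ((b : ℚ) + 1) * (b + 2) + 2 ≤ 2 * (y + 1) := by exact_mod_cast hc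
  have hk : (2 : ℚ) * (b + 1) * (b + 3) ≤ (y + 1) ^ 2 + b * (y + 1) - b - 3 := by
    rcases Nat.eq_zero_or_pos b with rfl | hb1
    · push_cast; nlinarith
    · have h3 : 3 * b ≤ y := by
        rcases (by omega : b = 1 ∨ 2 ≤ b) with rfl | h
        · omega
        · nlinarith
      have h3' : (3 : ℚ) * b ≤ y := by exact_mod_cast h3
      have hb1' : (1 : ℚ) ≤ b := by exact_mod_cast hb1
      nlinarith [mul_nonneg hb (sub_nonneg.2 h3')]
  have hp : (0 : ℚ) ≤ (y + 1) ^ 2 + b * (y + 1) - b - 3 := by nlinarith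
  have := mul_nonneg (sub_nonneg.2 hc') hp
  push_cast
  nlinarith

lemma chain_aux (k : ℕ) : ∀ y b : ℕ, 2 ≤ y → 2 * (y + k) ≤ (b + 1) * (b + 2) →
    hk (y + k + b + k) y 2 ≤ hk (y + k + b) (y + k) 2 ∧
    (0 < k → hk (y + k + b + k) y 2 < hk (y + k + b) (y + k) 2) := by
  induction k with
  | zero => intro y b _ _; simp
  | succ k ih =>
    intro y b hy hc
    have h1 := (ih y (b + 2) hy (by nlinarith)).1
    have h2 := c2_lt (y + k) b (by omega) (by rw [add_assoc]; exact hc)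
    rw [show y + k + (b + 2) + k = y + (k + 1) + b + (k + 1) by ring] at h1
    rw [show y + k + (b + 2) = y + k + 1 + b + 1 by ring] at h1
    rw [← add_assoc y k 1] at *
    have := lt_of_le_of_lt h1 h2
    exact ⟨this.le, fun _ => this⟩

lemma chain_s5 (x y a b : ℕ) (hy : 2 ≤ y) (hya : y ≤ a) (hx : x + y = 2 * a + b)
    (hc : 2 * a ≤ (b + 1) * (b + 2)) :
    hk x y 2 ≤ hk (a + b) a 2 ∧ (y < a → hk x y 2 < hk (a + b) a 2) := by
  obtain ⟨k, rfl⟩ := Nat.exists_eq_add_of_le hya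
  obtain rfl : x = y + k + b + k := by omega
  have := chain_aux k y b hy hc
  exact ⟨this.1, fun h => this.2 (by omega)⟩

open Nat in
lemma c1_lt (x y : ℕ) (hy : 3 ≤ y) (hx : y + 1 ≤ x) : hk x (y + 1) 1 < hk x y 2 := by
  have e1 : hk x (y + 1) 1 = (x + y + 2)! / ((x + 2)! * (y + 1)!) *
      ((((x : ℚ) - y) * (x + 1) * (y + 1)) / (y + 2)) := by
    unfold hk
    rw [show x + (y + 1) + 1 = x + y + 2 by ring,
      show (y + 1 + 1)! = (y + 2) * (y + 1)! from Nat.factorial_succ (y + 1)]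
    push_cast; field_simp; norm_num; ring
  have e2 : hk x y 2 = (x + y + 2)! / ((x + 2)! * (y + 1)!) *
      ((((x : ℚ) - y + 1) * x * (y - 1)) / 2) := by
    unfold hk
    push_cast; field_simp; norm_num; ring
  rw [e1, e2]
  apply mul_lt_mul_of_pos_left _ (by positivity)
  rw [div_lt_div_iff₀ (by positivity) (by positivity)]
  obtain ⟨d, rfl⟩ := Nat.exists_eq_add_of_le hx
  obtain ⟨t, rfl⟩ := Nat.exists_eq_add_of_le hy
  rw [← sub_pos]
  push_cast
  ring_nf
  positivity

open Nat in
lemma c0_lt (x y : ℕ) (hy : 2 ≤ y) (hx : y + 1 ≤ x) : hk x (y + 1) 0 < hk x y 1 := by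
  have e1 : hk x (y + 1) 0 = (x + y + 1)! / ((x + 2)! * (y + 1)!) *
      (((x : ℚ) - y) * (x + 2)) := by
    unfold hk
    rw [show x + (y + 1) + 0 = x + y + 1 by ring,
      show (y + 1 + 1)! = (y + 2) * (y + 1)! from Nat.factorial_succ (y + 1)]
    push_cast; field_simp; norm_num; ring
  have e2 : hk x y 1 = (x + y + 1)! / ((x + 2)! * (y + 1)!) *
      (((x : ℚ) - y + 1) * (x + 1) * y) := by
    unfold hk
    push_cast; field_simp; norm_num; ring
  rw [e1, e2]
  apply mul_lt_mul_of_pos_left _ (by positivity)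
  obtain ⟨d, rfl⟩ := Nat.exists_eq_add_of_le hx
  obtain ⟨t, rfl⟩ := Nat.exists_eq_add_of_le hy
  rw [← sub_pos]
  push_cast
  ring_nf
  positivity

set_option maxHeartbeats 2000000 in
open Nat in
lemma small (w : ℕ) : hk (w + 5) 3 1 < hk (w + 4) 3 2 ∧ hk (w + 6) 2 1 < hk (w + 4) 3 2 ∧
    hk (w + 7) 1 1 < hk (w + 4) 3 2 ∧ hk (w + 7) 2 0 < hk (w + 4) 3 2 ∧
    hk (w + 8) 1 0 < hk (w + 4) 3 2 ∧ hk (w + 9) 0 0 < hk (w + 4) 3 2 := by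
  have f7 : (w + 7)! = (w + 7) * (w + 6)! := Nat.factorial_succ (w + 6)
  have f8 : (w + 8)! = (w + 8) * (w + 7)! := Nat.factorial_succ (w + 7)
  have f9 : (w + 9)! = (w + 9) * (w + 8)! := Nat.factorial_succ (w + 8)
  have f10 : (w + 10)! = (w + 10) * (w + 9)! := Nat.factorial_succ (w + 9)
  have f11 : (w + 11)! = (w + 11) * (w + 10)! := Nat.factorial_succ (w + 10)
  have hp : ((w + 6)! : ℚ) ≠ 0 := by positivity
  have e0 : hk (w + 4) 3 2 = (w + 9) * (w + 8) * (w + 7) * (w + 4) * (w + 2) / 24 := by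
    unfold hk
    simp only [add_assoc, Nat.reduceAdd, f9, f8, f7]
    norm_num [Nat.factorial_succ 3, Nat.factorial]; field_simp; ring
  have e1 : hk (w + 5) 3 1 = (w + 9) * (w + 8) * (w + 6) * (w + 3) / 8 := by
    unfold hk
    simp only [add_assoc, Nat.reduceAdd, f9, f8, f7]
    norm_num [Nat.factorial]; field_simp; ring
  have e2 : hk (w + 6) 2 1 = (w + 9) * (w + 7) * (w + 5) / 3 := by
    unfold hk
    simp only [add_assoc, Nat.reduceAdd, f9, f8, f7]
    norm_num [Nat.factorial]; field_simp; ring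
  have e3 : hk (w + 7) 1 1 = (w + 8) * (w + 7) / 2 := by
    unfold hk
    simp only [add_assoc, Nat.reduceAdd, f9, f8, f7]
    norm_num [Nat.factorial]; field_simp; ring
  have e4 : hk (w + 7) 2 0 = (w + 9) * (w + 6) / 2 := by
    unfold hk
    simp only [add_assoc, Nat.reduceAdd, f9, f8, f7]
    norm_num [Nat.factorial]; field_simp; ring
  have e5 : hk (w + 8) 1 0 = w + 8 := by
    unfold hk
    simp only [add_assoc, Nat.reduceAdd, f10, f9, f8, f7]
    norm_num [Nat.factorial]; field_simp; ring
  have e6 : hk (w + 9) 0 0 = 1 := by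
    unfold hk
    simp only [add_assoc, Nat.reduceAdd, f11, f10, f9, f8, f7]
    norm_num [Nat.factorial]; field_simp; ring
  rw [e0, e1, e2, e3, e4, e5, e6]
  refine ⟨?_, ?_, ?_, ?_, ?_, ?_⟩ <;> rw [← sub_pos] <;> ring_nf <;> positivity

lemma main_lt (a b x y z : ℕ) (ha : 3 ≤ a) (hc : 2 * a ≤ (b + 1) * (b + 2)) (hxy : y ≤ x)
    (hyz : z ≤ y) (hn : x + y + z = 2 * a + b + 2) (hx : a + b ≤ x) (hz : z ≤ 2)
    (hne : ¬ (y = a ∧ z = 2)) : hk x y z < hk (a + b) a 2 := by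
  have hb : 1 ≤ b := by
    by_contra h
    obtain rfl : b = 0 := by omega
    omega
  obtain ⟨w, hw⟩ : ∃ w, 2 * a + b + 2 = w + 9 := ⟨2 * a + b + 2 - 9, by omega⟩
  have hb3 : hk (w + 4) 3 2 ≤ hk (a + b) a 2 := (chain_s5 (w + 4) 3 a b (by omega) ha (by omega) hc).1
  obtain ⟨s1, s2, s3, s4, s5, s6⟩ := small w
  have one : ∀ x y, 1 ≤ y → y ≤ x → x + y + 1 = 2 * a + b + 2 → a + b ≤ x →
      hk x y 1 < hk (a + b) a 2 := by
    intro x y h1 hxy hn hx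
    rcases (by omega : y = 1 ∨ y = 2 ∨ y = 3 ∨ 4 ≤ y) with rfl | rfl | rfl | h
    · obtain rfl : x = w + 7 := by omega
      linarith
    · obtain rfl : x = w + 6 := by omega
      linarith
    · obtain rfl : x = w + 5 := by omega
      linarith
    · obtain ⟨y, rfl⟩ : ∃ t, y = t + 1 := ⟨y - 1, by omega⟩
      exact lt_of_lt_of_le (c1_lt x y (by omega) hxy)
        (chain_s5 x y a b (by omega) (by omega) (by omega) hc).1
  rcases (by omega : z = 2 ∨ z = 1 ∨ z = 0) with rfl | rfl | rfl
  · exact (chain_s5 x y a b (by omega) (by omega) (by omega) hc).2 (by omega)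
  · exact one x y hyz hxy hn hx
  · rcases (by omega : y = 0 ∨ y = 1 ∨ y = 2 ∨ 3 ≤ y) with rfl | rfl | rfl | h
    · obtain rfl : x = w + 9 := by omega
      linarith
    · obtain rfl : x = w + 8 := by omega
      linarith
    · obtain rfl : x = w + 7 := by omega
      linarith
    · obtain ⟨y, rfl⟩ : ∃ t, y = t + 1 := ⟨y - 1, by omega⟩
      exact lt_trans (c0_lt x y (by omega) hxy) (one x y (by omega) (by omega) (by omega) hx)

lemma main_not (a b : ℕ) (m : List ℕ) (x y z : ℕ) (ha : 3 ≤ a)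
    (hc : 2 * a ≤ (b + 1) * (b + 2)) (hxy : y ≤ x)
    (hyz : z ≤ y) (hn : x + y + z = 2 * a + b + 2) (hx : a + b ≤ x) (hz : z ≤ 2)
    (hne : ¬ (y = a ∧ z = 2)) (hl : ∀ i, m.getD i 0 = sh x y z i)
    (hs : m.sum = x + y + z) : ¬ fSYT [a + b, a, 2] ≤ fSYT m := by
  have h1 := fSYT_eq m x y z hl hs hxy hyz
  have h2 := fSYT_eq [a + b, a, 2] (a + b) a 2 (fun i => rfl) (by simp; ring) (by omega) (by omega)
  have h3 := main_lt a b x y z ha hc hxy hyz hn hx hz hne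
  rw [← h1, ← h2] at h3
  have : fSYT m < fSYT [a + b, a, 2] := by exact_mod_cast h3
  omega


/-- `(a+b, a, 2)` is maximal in the standard immersion poset on
partitions of `2a+b+2` if and only if `a ≤ (b+1)(b+2)/2`. -/
theorem std_maximal_three_row_two (a b : ℕ) (ha : 3 ≤ a) :
    StdMaximal (2 * a + b + 2) [a + b, a, 2] ↔ a ≤ (b + 1) * (b + 2) / 2 := by
  have hev : 2 * ((b + 1) * (b + 2) / 2) = (b + 1) * (b + 2) :=
    Nat.two_mul_div_two_of_even (Nat.even_mul_succ_self (b + 1))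
  constructor
  · intro hmax
    by_contra hc
    obtain ⟨y, rfl⟩ : ∃ t, a = t + 1 := ⟨a - 1, by omega⟩
    have h := c2_ge y b (by omega) (by omega)
    rw [← fSYT_eq [y + 1 + b, y + 1, 2] _ _ _ (fun i => rfl) (by simp; ring) (by omega) (by omega),
      ← fSYT_eq [y + 1 + b + 1, y, 2] _ _ _ (fun i => rfl) (by simp; ring) (by omega)
        (by omega)] at h
    refine hmax [y + 1 + b + 1, y, 2] ⟨?_, ?_, ?_⟩ ?_ ⟨?_, by exact_mod_cast h⟩
    · simp; omega
    · simp; omega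
    · simp; ring
    · simp
    · intro k
      rcases k with _ | _ | _ | k <;> simp <;> omega
  · intro hc m hm hne hle
    obtain ⟨hd, hf⟩ := hle
    obtain ⟨hp, hpos, hsum⟩ := hm
    have hc2 : 2 * a ≤ (b + 1) * (b + 2) := by omega
    have d1 := hd 1
    have d2 := hd 2
    have d3 := hd 3
    rcases m with _ | ⟨x, _ | ⟨y, _ | ⟨z, _ | ⟨u, t⟩⟩⟩⟩
    · simp at d1; omega
    · simp at d1 d2 d3 hp hsum
      refine main_not a b [x] x 0 0 ha hc2 (by omega) (by omega) (by omega) (by omega) (by omega)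
        (by omega) ?_ (by simp) hf
      intro i
      rcases i with _ | _ | _ | i <;> simp [sh]
    · simp at d1 d2 d3 hp hsum
      refine main_not a b [x, y] x y 0 ha hc2 (by omega) (by omega) (by omega) (by omega)
        (by omega) (by omega) ?_ (by simp) hf
      intro i
      rcases i with _ | _ | _ | i <;> simp [sh]
    · simp at d1 d2 d3 hp hsum
      refine main_not a b [x, y, z] x y z ha hc2 (by omega) (by omega) (by omega) (by omega)
        (by omega) ?_ (fun i => rfl) (by simp; ring) hf
      rintro ⟨rfl, rfl⟩
      apply hne
      obtain rfl : x = y + b := by omega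
      rfl
    · have hu := hpos u (by simp)
      simp at d3 hsum
      omega
end

section
/- Let a > 2 and b ≥ 1. The hook partition (a, 1^b) is a maximal element in the standard immersion poset on partitions of a+b if and only if b ≤ 2. -/
open Finset MvPolynomial

/-- `T` is a standard tableau of shape `l`. -/
def IsStd (l : List ℕ) (T : ℕ → ℕ → ℕ) : Prop :=
  IsSSYT l T ∧ HasContent l T (List.replicate l.sum 1)

theorem cells_finite_s6 (l : List ℕ) : {c : ℕ × ℕ | c.2 < l.getD c.1 0}.Finite := by
  refine ((Set.finite_Iio l.length).prod (Set.finite_Iio (l.sum + 1))).subset ?_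
  rintro ⟨i, j⟩ h
  simp only [Set.mem_ofPred_eq] at h
  by_cases hi : i < l.length
  · rw [List.getD_eq_getElem _ _ hi] at h
    have := List.le_sum_of_mem (List.getElem_mem hi)
    simp only [Set.mem_prod, Set.mem_Iio]
    omega
  · rw [List.getD_eq_default _ _ (by omega)] at h
    omega

theorem fiber_finite (l : List ℕ) (T : ℕ → ℕ → ℕ) (k : ℕ) :
    Finite {c : ℕ × ℕ // c.2 < l.getD c.1 0 ∧ T c.1 c.2 = k} :=
  ((cells_finite_s6 l).subset (fun _ h => h.1) :
    {c : ℕ × ℕ | c.2 < l.getD c.1 0 ∧ T c.1 c.2 = k}.Finite)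

theorem IsStd.inj {l : List ℕ} {T : ℕ → ℕ → ℕ} (h : IsStd l T) {i j i' j' : ℕ}
    (h1 : j < l.getD i 0) (h2 : j' < l.getD i' 0) (he : T i j = T i' j') : i = i' ∧ j = j' := by
  have := h.2 (T i j)
  have hf := fiber_finite l T (T i j)
  have hle : Nat.card {c : ℕ × ℕ // c.2 < l.getD c.1 0 ∧ T c.1 c.2 = T i j} ≤ 1 := by
    rw [this, getD_rep]; split_ifs <;> omega
  rw [Finite.card_le_one_iff_subsingleton] at hle
  have := hle.elim ⟨(i, j), h1, rfl⟩ ⟨(i', j'), h2, he.symm⟩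
  simpa using this

theorem IsStd.lt {l : List ℕ} {T : ℕ → ℕ → ℕ} (h : IsStd l T) {i j : ℕ}
    (h1 : j < l.getD i 0) : T i j < l.sum := by
  by_contra hc
  have := h.2 (T i j)
  have hf := fiber_finite l T (T i j)
  rw [getD_rep, if_neg hc, Finite.card_eq_zero_iff] at this
  exact this.elim ⟨(i, j), h1, rfl⟩

theorem std_finite (l : List ℕ) : Finite {T : ℕ → ℕ → ℕ // IsStd l T} := by
  have : Finite {c : ℕ × ℕ // c.2 < l.getD c.1 0} := cells_finite_s6 l
  refine Finite.of_injective (β := {c : ℕ × ℕ // c.2 < l.getD c.1 0} → Fin l.sum)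
    (fun T c => ⟨T.1 c.1.1 c.1.2, T.2.lt c.2⟩) ?_
  rintro ⟨T, hT⟩ ⟨S, hS⟩ h
  apply Subtype.ext
  funext i j
  by_cases hc : j < l.getD i 0
  · have := congrFun h ⟨(i, j), hc⟩
    simpa using this
  · simp only
    rw [hT.1.2.2 i j (by omega), hS.1.2.2 i j (by omega)]

theorem fSYT_le {l m : List ℕ} (F : (ℕ → ℕ → ℕ) → (ℕ → ℕ → ℕ))
    (hF : ∀ T, IsStd l T → IsStd m (F T))
    (hi : ∀ T S, IsStd l T → IsStd l S → F T = F S → T = S) : fSYT l ≤ fSYT m := by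
  have := std_finite m
  refine Nat.card_le_card_of_injective
    (α := {T : ℕ → ℕ → ℕ // IsStd l T}) (β := {T : ℕ → ℕ → ℕ // IsStd m T})
    (fun T => ⟨F T.1, hF _ T.2⟩) ?_
  rintro ⟨T, hT⟩ ⟨S, hS⟩ h
  exact Subtype.ext (hi _ _ hT hS (by simpa using h))

theorem fSYT_lt {l m : List ℕ} (F : (ℕ → ℕ → ℕ) → (ℕ → ℕ → ℕ))
    (hF : ∀ T, IsStd l T → IsStd m (F T))
    (hi : ∀ T S, IsStd l T → IsStd l S → F T = F S → T = S)
    (E : ℕ → ℕ → ℕ) (hE : IsStd m E) (hn : ∀ T, IsStd l T → F T ≠ E) : fSYT l < fSYT m := by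
  have := std_finite m
  have hinj : Function.Injective (fun T : {T : ℕ → ℕ → ℕ // IsStd l T} =>
      (⟨F T.1, hF _ T.2⟩ : {T : ℕ → ℕ → ℕ // IsStd m T})) := by
    rintro ⟨T, hT⟩ ⟨S, hS⟩ h
    exact Subtype.ext (hi _ _ hT hS (by simpa using h))
  by_contra hc
  obtain ⟨⟨T, hT⟩, h⟩ := (hinj.bijective_of_nat_card_le (not_lt.1 hc)).2 ⟨E, hE⟩
  exact hn T hT (by simpa using h)

/-- Rearrangement of a filling along a permutation of the cells. -/
def mv (φ : ℕ × ℕ ≃ ℕ × ℕ) (T : ℕ → ℕ → ℕ) : ℕ → ℕ → ℕ :=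
  fun i j => T (φ (i, j)).1 (φ (i, j)).2

theorem mv_inj (φ : ℕ × ℕ ≃ ℕ × ℕ) {T S : ℕ → ℕ → ℕ} (h : mv φ T = mv φ S) : T = S := by
  funext i j
  have := congrFun (congrFun h (φ.symm (i, j)).1) (φ.symm (i, j)).2
  simpa [mv] using this

theorem mv_std {l m : List ℕ} (φ : ℕ × ℕ ≃ ℕ × ℕ) (hs : l.sum = m.sum)
    (hφ : ∀ c : ℕ × ℕ, c.2 < m.getD c.1 0 ↔ (φ c).2 < l.getD (φ c).1 0)
    {T : ℕ → ℕ → ℕ} (hT : IsStd l T)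
    (h1 : ∀ i j1 j2, j1 ≤ j2 → j2 < m.getD i 0 → mv φ T i j1 ≤ mv φ T i j2)
    (h2 : ∀ i1 i2 j, i1 < i2 → j < m.getD i2 0 → mv φ T i1 j < mv φ T i2 j) :
    IsStd m (mv φ T) := by
  refine ⟨⟨h1, h2, ?_⟩, ?_⟩
  · intro i j h
    apply hT.1.2.2
    have := hφ (i, j)
    simp only at this
    omega
  · intro k
    rw [← hs, ← hT.2 k]
    exact Nat.card_congr (φ.subtypeEquiv (fun c => by rw [hφ c]; rfl))

theorem getD_hook (a b i : ℕ) :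
    (a :: List.replicate b 1).getD i 0 = if i = 0 then a else if i ≤ b then 1 else 0 := by
  cases i with
  | zero => simp
  | succ i =>
    rw [List.getD_cons_succ, getD_rep]; simp only [Nat.succ_ne_zero, if_false]; congr 1

theorem getD_hook2 (a b i : ℕ) :
    (a :: 2 :: List.replicate b 1).getD i 0 =
      if i = 0 then a else if i = 1 then 2 else if i ≤ b + 1 then 1 else 0 := by
  rcases i with _ | _ | i
  · simp
  · simp
  · rw [List.getD_cons_succ, List.getD_cons_succ, getD_rep]
    simp only [Nat.succ_ne_zero, if_false]
    grind

/-- The column-first tableau of hook shape. -/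
def colTab (a b : ℕ) : ℕ → ℕ → ℕ := fun i j =>
  if i = 0 then (if j = 0 then 0 else if j < a then j + b else 0)
  else if j = 0 ∧ i ≤ b then i else 0

theorem colTab_std (a b : ℕ) (ha : 0 < a) : IsStd (a :: List.replicate b 1) (colTab a b) := by
  refine ⟨⟨?_, ?_, ?_⟩, ?_⟩
  · intro i j1 j2; rw [getD_hook]; unfold colTab; grind
  · intro i1 i2 j; rw [getD_hook]; unfold colTab; grind
  · intro i j; rw [getD_hook]; unfold colTab; grind
  · intro k
    rw [getD_rep]
    simp only [List.sum_cons, List.sum_replicate, smul_eq_mul, mul_one]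
    simp only [getD_hook]
    split_ifs with h
    · rw [Nat.card_eq_one_iff_exists]
      refine ⟨⟨if k ≤ b then (k, 0) else (0, k - b), ?_⟩, ?_⟩
      · unfold colTab; grind
      · rintro ⟨⟨i, j⟩, h1, h2⟩
        apply Subtype.ext
        simp only at h1 h2 ⊢
        unfold colTab at h2; grind
    · have : IsEmpty {c : ℕ × ℕ // (c.2 < if c.1 = 0 then a else if c.1 ≤ b then 1 else 0) ∧
          colTab a b c.1 c.2 = k} := by
        constructor
        rintro ⟨⟨i, j⟩, h1, h2⟩
        simp only at h1 h2
        unfold colTab at h2; grind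
      exact Nat.card_of_isEmpty

theorem sum_hook (a b : ℕ) : (a :: List.replicate b 1).sum = a + b := by simp

set_option linter.unusedSimpArgs false

theorem mv_swap (p1 p2 q1 q2 i j : ℕ) (T : ℕ → ℕ → ℕ) :
    mv (Equiv.swap (p1, p2) (q1, q2)) T i j =
      if i = p1 ∧ j = p2 then T q1 q2 else if i = q1 ∧ j = q2 then T p1 p2 else T i j := by
  simp only [mv, Equiv.swap_apply_def, Prod.mk.injEq]
  split_ifs <;> rfl

theorem mv_trans (φ ψ : ℕ × ℕ ≃ ℕ × ℕ) (T : ℕ → ℕ → ℕ) :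
    mv (φ.trans ψ) T = mv φ (mv ψ T) := rfl

/-- Moving into a hook shape. -/
theorem mv_hook {l : List ℕ} {a b : ℕ} (φ : ℕ × ℕ ≃ ℕ × ℕ) (hs : l.sum = a + b)
    (hφ : ∀ i j : ℕ, (j < if i = 0 then a else if i ≤ b then 1 else 0) ↔
      (φ (i, j)).2 < l.getD (φ (i, j)).1 0)
    {T : ℕ → ℕ → ℕ} (hT : IsStd l T)
    (h1 : ∀ j1 j2, j1 ≤ j2 → j2 < a → mv φ T 0 j1 ≤ mv φ T 0 j2)
    (h2 : ∀ i1 i2, i1 < i2 → i2 ≤ b → mv φ T i1 0 < mv φ T i2 0) :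
    IsStd (a :: List.replicate b 1) (mv φ T) := by
  refine mv_std φ (by simpa using hs) (fun c => by rw [getD_hook]; exact hφ c.1 c.2) hT ?_ ?_
  · intro i j1 j2 hj h
    rw [getD_hook] at h
    split_ifs at h with h3 h4
    · subst h3; exact h1 _ _ hj h
    · obtain rfl : j1 = j2 := by omega
      rfl
    · omega
  · intro i1 i2 j hi h
    rw [getD_hook] at h
    split_ifs at h with h3 h4
    · omega
    · obtain rfl : j = 0 := by omega
      exact h2 _ _ hi h4
    · omega

/-- Moving into a near-hook shape. -/
theorem mv_hook2 {l : List ℕ} {a b : ℕ} (φ : ℕ × ℕ ≃ ℕ × ℕ) (hs : l.sum = a + (2 + b))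
    (hφ : ∀ i j : ℕ, (j < if i = 0 then a else if i = 1 then 2 else if i ≤ b + 1 then 1 else 0) ↔
      (φ (i, j)).2 < l.getD (φ (i, j)).1 0)
    {T : ℕ → ℕ → ℕ} (hT : IsStd l T)
    (h1 : ∀ j1 j2, j1 ≤ j2 → j2 < a → mv φ T 0 j1 ≤ mv φ T 0 j2)
    (h2 : ∀ i1 i2, i1 < i2 → i2 ≤ b + 1 → mv φ T i1 0 < mv φ T i2 0)
    (h3 : mv φ T 1 0 ≤ mv φ T 1 1) (h4 : mv φ T 0 1 < mv φ T 1 1) :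
    IsStd (a :: 2 :: List.replicate b 1) (mv φ T) := by
  refine mv_std φ (by simpa using hs) (fun c => by rw [getD_hook2]; exact hφ c.1 c.2) hT ?_ ?_
  · intro i j1 j2 hj h
    rw [getD_hook2] at h
    split_ifs at h with g3 g4 g5
    · subst g3; exact h1 _ _ hj h
    · subst g4
      rcases hj.eq_or_lt with rfl | hlt
      · rfl
      · obtain ⟨rfl, rfl⟩ : j1 = 0 ∧ j2 = 1 := by omega
        exact h3
    · obtain rfl : j1 = j2 := by omega
      rfl
    · omega
  · intro i1 i2 j hi h
    rw [getD_hook2] at h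
    split_ifs at h with g3 g4 g5
    · omega
    · subst g4
      obtain rfl : i1 = 0 := by omega
      obtain rfl | rfl : j = 0 ∨ j = 1 := by omega
      · exact h2 _ _ hi (by omega)
      · exact h4
    · obtain rfl : j = 0 := by omega
      exact h2 _ _ hi g5
    · omega

theorem IsStd.row {l : List ℕ} {T : ℕ → ℕ → ℕ} (h : IsStd l T) {i j1 j2 : ℕ}
    (hj : j1 < j2) (h2 : j2 < l.getD i 0) : T i j1 < T i j2 := by
  refine lt_of_le_of_ne (h.1.1 i j1 j2 hj.le h2) (fun he => ?_)
  have := h.inj (hj.trans h2) h2 he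
  omega

theorem row_le_of_lt {T : ℕ → ℕ → ℕ} {a : ℕ}
    (h : ∀ j1 j2, j1 < j2 → j2 < a → T 0 j1 ≤ T 0 j2) :
    ∀ j1 j2, j1 ≤ j2 → j2 < a → T 0 j1 ≤ T 0 j2 := by
  intro j1 j2 hj h2
  rcases hj.eq_or_lt with rfl | hlt
  · rfl
  · exact h _ _ hlt h2

theorem one_row_lt (a : ℕ) (ha : 2 < a) : fSYT [a + 1] < fSYT [a, 1] := by
  have e1 := getD_hook (a + 1) 0
  simp only [List.replicate] at e1
  have hE := colTab_std a 1 (by omega)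
  refine fSYT_lt (mv (Equiv.swap (0, a) (1, 0))) ?_ (fun _ _ _ _ h => mv_inj _ h) _ hE ?_
  · intro T hT
    have R : ∀ j1 j2, j1 < j2 → j2 < a + 1 → T 0 j1 < T 0 j2 := fun j1 j2 h h' =>
      hT.row h (by simpa using h')
    refine mv_hook (a := a) (b := 1) _ (by simp) ?_ hT (row_le_of_lt ?_) ?_
    · clear R hT hE
      intro i j; simp only [e1, Equiv.swap_apply_def, Prod.mk.injEq]; grind
    · intro j1 j2 h h'
      simp only [mv_swap, true_and, and_true]
      have := R j1 j2 h (by omega)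
      split_ifs <;> first | omega | (exfalso; tauto)
    · intro i1 i2 h h'
      obtain ⟨rfl, rfl⟩ : i1 = 0 ∧ i2 = 1 := by omega
      have := R 0 a (by omega) (by omega)
      simp only [mv_swap, true_and, and_true]
      split_ifs <;> first | omega | (exfalso; tauto)
  · intro T hT h
    have h1 := hT.1.1 0 1 a (by omega) (by simp)
    have h2 := congrFun (congrFun h 0) 1
    have h3 := congrFun (congrFun h 1) 0
    simp only [mv_swap, colTab, true_and, and_true] at h2 h3
    split_ifs at h2 h3 <;> first | omega | (exfalso; tauto)

theorem one_row_lt2 (a : ℕ) (ha : 2 < a) : fSYT [a + 2] < fSYT [a, 1, 1] := by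
  have e1 := getD_hook (a + 2) 0
  simp only [List.replicate] at e1
  have hE := colTab_std a 2 (by omega)
  refine fSYT_lt (mv ((Equiv.swap (0, a) (1, 0)).trans (Equiv.swap (0, a+1) (2, 0)))) ?_
    (fun _ _ _ _ h => mv_inj _ h) _ hE ?_
  · intro T hT
    have R : ∀ j1 j2, j1 < j2 → j2 < a + 2 → T 0 j1 < T 0 j2 := fun j1 j2 h h' =>
      hT.row h (by simpa using h')
    refine mv_hook (a := a) (b := 2) _ (by simp) ?_ hT (row_le_of_lt ?_) ?_
    · clear R hT hE
      intro i j; simp only [e1, Equiv.trans_apply, Equiv.swap_apply_def, Prod.mk.injEq]; grind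
    · intro j1 j2 h h'
      simp only [mv_trans, mv_swap, true_and, and_true]
      have := R j1 j2 h (by omega)
      split_ifs <;> first | omega | (exfalso; tauto)
    · intro i1 i2 h h'
      have r1 := R 0 a (by omega) (by omega)
      have r2 := R a (a + 1) (by omega) (by omega)
      obtain ⟨rfl, rfl⟩ | ⟨rfl, rfl⟩ | ⟨rfl, rfl⟩ :
        (i1 = 0 ∧ i2 = 1) ∨ (i1 = 0 ∧ i2 = 2) ∨ (i1 = 1 ∧ i2 = 2) := by omega
      all_goals
        simp only [mv_trans, mv_swap, true_and, and_true]
        split_ifs <;> first | omega | (exfalso; tauto)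
  · intro T hT h
    have h1 := hT.1.1 0 1 a (by omega) (by simp)
    have h2 := congrFun (congrFun h 0) 1
    have h3 := congrFun (congrFun h 1) 0
    simp only [mv_trans, mv_swap, colTab, true_and, and_true] at h2 h3
    split_ifs at h2 h3 <;> first | omega | (exfalso; tauto)

theorem two_row_lt (a : ℕ) (ha : 2 < a) : fSYT [a, 2] < fSYT [a, 1, 1] := by
  have e1 := getD_hook2 a 0
  simp only [List.replicate] at e1
  have hE := colTab_std a 2 (by omega)
  refine fSYT_lt (mv (Equiv.swap (1, 1) (2, 0))) ?_
    (fun _ _ _ _ h => mv_inj _ h) _ hE ?_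
  · intro T hT
    have R : ∀ j1 j2, j1 < j2 → j2 < a → T 0 j1 < T 0 j2 := fun j1 j2 h h' =>
      hT.row h (by simpa using h')
    refine mv_hook (a := a) (b := 2) _ (by simp) ?_ hT (row_le_of_lt ?_) ?_
    · clear R hT hE
      intro i j; simp only [e1, Equiv.swap_apply_def, Prod.mk.injEq]; grind
    · intro j1 j2 h h'
      simp only [mv_swap, true_and, and_true]
      have := R j1 j2 h (by omega)
      split_ifs <;> first | omega | (exfalso; tauto)
    · intro i1 i2 h h'
      have r1 := hT.row (i := 1) (j1 := 0) (j2 := 1) (by omega) (by simp)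
      have r2 := hT.1.2.1 0 1 0 (by omega) (by simp)
      obtain ⟨rfl, rfl⟩ | ⟨rfl, rfl⟩ | ⟨rfl, rfl⟩ :
        (i1 = 0 ∧ i2 = 1) ∨ (i1 = 0 ∧ i2 = 2) ∨ (i1 = 1 ∧ i2 = 2) := by omega
      all_goals
        simp only [mv_swap, true_and, and_true]
        split_ifs <;> first | omega | (exfalso; tauto)
  · intro T hT h
    have h1 := hT.1.2.1 0 1 1 (by omega) (by simp)
    have h2 := congrFun (congrFun h 0) 1
    have h3 := congrFun (congrFun h 2) 0
    simp only [mv_swap, colTab, true_and, and_true] at h2 h3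
    split_ifs at h2 h3 <;> first | omega | (exfalso; tauto)

set_option maxHeartbeats 2000000 in
theorem hook_lt (a : ℕ) (ha : 2 < a) : fSYT [a + 1, 1] < fSYT [a, 1, 1] := by
  have e1 := getD_hook (a + 1) 1
  simp only [List.replicate] at e1
  have hE := colTab_std a 2 (by omega)
  set F : (ℕ → ℕ → ℕ) → (ℕ → ℕ → ℕ) := fun T => if T 1 0 < T 0 a then
    mv (Equiv.swap (0, a) (2, 0)) T else
    mv ((Equiv.swap (0, a) (2, 0)).trans (Equiv.swap (0, a-1) (1, 0))) T with hF
  have key : ∀ T, IsStd [a + 1, 1] T → (T 1 0 < T 0 a ∧ F T = mv (Equiv.swap (0, a) (2, 0)) T ∧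
      F T 0 (a-1) < F T 2 0) ∨ (T 0 a < T 1 0 ∧
      F T = mv ((Equiv.swap (0, a) (2, 0)).trans (Equiv.swap (0, a-1) (1, 0))) T ∧
      F T 2 0 < F T 0 (a-1) ∧ F T 0 (a-2) < F T 1 0) := by
    intro T hT
    have j1 := hT.row (i := 0) (j1 := a - 1) (j2 := a) (by omega) (by simp)
    have j2 := hT.row (i := 0) (j1 := a - 2) (j2 := a - 1) (by omega) (by simp)
    have i3 : T 0 a ≠ T 1 0 := fun he => by
      have := hT.inj (i := 0) (j := a) (i' := 1) (j' := 0) (by simp) (by simp) he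
      omega
    by_cases h : T 1 0 < T 0 a
    · left
      have : F T = mv (Equiv.swap (0, a) (2, 0)) T := by simp [hF, h]
      refine ⟨h, this, ?_⟩
      rw [this]
      simp only [mv_swap, true_and, and_true]
      split_ifs <;> first | omega | (exfalso; tauto)
    · right
      have : F T = mv ((Equiv.swap (0, a) (2, 0)).trans (Equiv.swap (0, a-1) (1, 0))) T := by
        simp [hF, h]
      refine ⟨by omega, this, ?_⟩
      rw [this]
      simp only [mv_trans, mv_swap, true_and, and_true]
      constructor <;> split_ifs <;> first | omega | (exfalso; tauto)
  refine fSYT_lt F ?_ ?_ _ hE ?_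
  · intro T hT
    have R : ∀ j1 j2, j1 < j2 → j2 < a + 1 → T 0 j1 < T 0 j2 := fun j1 j2 h h' =>
      hT.row h (by simpa using h')
    have r1 := R 0 (a - 1) (by omega) (by omega)
    have r2 := R (a - 1) a (by omega) (by omega)
    have r3 := hT.1.2.1 0 1 0 (by omega) (by simp)
    rcases key T hT with ⟨h, h', -⟩ | ⟨h, h', -⟩
    · rw [h']
      refine mv_hook (a := a) (b := 2) _ (by simp) ?_ hT (row_le_of_lt ?_) ?_
      · clear R hT hE key h' hF F
        intro i j; simp only [e1, Equiv.swap_apply_def, Prod.mk.injEq]; grind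
      · intro j1 j2 h h'
        simp only [mv_swap, true_and, and_true]
        have := R j1 j2 h (by omega)
        split_ifs <;> first | omega | (exfalso; tauto)
      · intro i1 i2 h h'
        obtain ⟨rfl, rfl⟩ | ⟨rfl, rfl⟩ | ⟨rfl, rfl⟩ :
          (i1 = 0 ∧ i2 = 1) ∨ (i1 = 0 ∧ i2 = 2) ∨ (i1 = 1 ∧ i2 = 2) := by omega
        all_goals
          simp only [mv_swap, true_and, and_true]
          split_ifs <;> first | omega | (exfalso; tauto)
    · rw [h']
      refine mv_hook (a := a) (b := 2) _ (by simp) ?_ hT (row_le_of_lt ?_) ?_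
      · clear R hT hE key h' hF F
        intro i j; simp only [e1, Equiv.trans_apply, Equiv.swap_apply_def, Prod.mk.injEq]; grind
      · intro j1 j2 h h'
        simp only [mv_trans, mv_swap, true_and, and_true]
        have := R j1 j2 h (by omega)
        have := R j1 a (by omega) (by omega)
        split_ifs <;> first | omega | (exfalso; tauto)
      · intro i1 i2 h h'
        obtain ⟨rfl, rfl⟩ | ⟨rfl, rfl⟩ | ⟨rfl, rfl⟩ :
          (i1 = 0 ∧ i2 = 1) ∨ (i1 = 0 ∧ i2 = 2) ∨ (i1 = 1 ∧ i2 = 2) := by omega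
        all_goals
          simp only [mv_trans, mv_swap, true_and, and_true]
          split_ifs <;> first | omega | (exfalso; tauto)
  · intro T S hT hS h
    rcases key T hT with ⟨-, h1, h2⟩ | ⟨-, h1, h2, -⟩ <;>
    rcases key S hS with ⟨-, h3, h4⟩ | ⟨-, h3, h4, -⟩
    · rw [h1, h3] at h; exact mv_inj _ h
    · rw [h] at h2; omega
    · rw [h] at h2; omega
    · rw [h1, h3] at h; exact mv_inj _ h
  · intro T hT h
    rcases key T hT with ⟨-, h1, h2⟩ | ⟨-, h1, -, h2⟩
    · rw [h] at h2; simp only [colTab, true_and, and_true] at h2; split_ifs at h2 <;> first | omega | (exfalso; tauto)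
    · rw [h] at h2; simp only [colTab, true_and, and_true] at h2; split_ifs at h2 <;> first | omega | (exfalso; tauto)

theorem swap_mem (P : ℕ × ℕ → Prop) {p q : ℕ × ℕ} (hp : P p) (hq : P q) (c : ℕ × ℕ) :
    P (Equiv.swap p q c) ↔ P c := by
  rw [Equiv.swap_apply_def]
  split_ifs with h1 h2
  · subst h1; simp [hp, hq]
  · subst h2; simp [hp, hq]
  · rfl

set_option maxHeartbeats 2000000 in
theorem hook_le (a b : ℕ) (ha : 2 < a) (hb : 1 ≤ b) :
    fSYT (a :: List.replicate (b + 2) 1) ≤ fSYT (a :: 2 :: List.replicate b 1) := by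
  have e1 := getD_hook a (b + 2)
  set φ := Equiv.swap ((1 : ℕ), (1 : ℕ)) (b + 2, 0) with hφ
  set ψ := (Equiv.swap ((1 : ℕ), (1 : ℕ)) (b + 2, 0)).trans (Equiv.swap (0, 1) (b + 1, 0)) with hψ
  set F : (ℕ → ℕ → ℕ) → (ℕ → ℕ → ℕ) := fun T => if T 0 1 < T (b + 2) 0 then
    mv φ T else mv ψ T with hF
  have key : ∀ T, IsStd (a :: List.replicate (b + 2) 1) T →
      (T 0 1 < T (b + 2) 0 ∧ F T = mv φ T ∧ F T (b + 1) 0 < F T 1 1) ∨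
      (T (b + 2) 0 ≤ T 0 1 ∧ F T = mv ψ T ∧ F T 1 1 ≤ F T (b + 1) 0) := by
    intro T hT
    have j1 := hT.1.2.1 (b + 1) (b + 2) 0 (by omega) (by rw [e1]; simp)
    by_cases h : T 0 1 < T (b + 2) 0
    · left
      have : F T = mv φ T := by simp [hF, h]
      refine ⟨h, this, ?_⟩
      rw [this, hφ]
      simp only [mv_swap, true_and, and_true]
      split_ifs <;> first | omega | (exfalso; tauto)
    · right
      have : F T = mv ψ T := by simp [hF, h]
      refine ⟨by omega, this, ?_⟩
      rw [this, hψ]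
      simp only [mv_trans, mv_swap, true_and, and_true]
      split_ifs <;> first | omega | (exfalso; tauto)
  refine fSYT_le F ?_ ?_
  · intro T hT
    have R : ∀ j1 j2, j1 < j2 → j2 < a → T 0 j1 < T 0 j2 := fun j1 j2 h h' =>
      hT.row h (by simpa using h')
    have C : ∀ i1 i2, i1 < i2 → i2 ≤ b + 2 → T i1 0 < T i2 0 := fun i1 i2 h h' =>
      hT.1.2.1 i1 i2 0 h (by rw [e1, if_neg (by omega), if_pos h']; omega)
    have c1 := C 1 (b + 2) (by omega) (by omega)
    have c2 := C (b + 1) (b + 2) (by omega) (by omega)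
    rcases key T hT with ⟨h, h', -⟩ | ⟨h, h', -⟩
    · rw [h', hφ]
      refine mv_hook2 (a := a) (b := b) _ (by simp; omega) ?_ hT (row_le_of_lt ?_) ?_ ?_ ?_
      · clear R C hT key h' hF F
        intro i j; simp only [e1, Equiv.swap_apply_def, Prod.mk.injEq]; grind
      · intro j1 j2 h h'
        simp only [mv_swap, true_and, and_true]
        have := R j1 j2 h (by omega)
        split_ifs <;> first | omega | (exfalso; tauto)
      · intro i1 i2 h h'
        simp only [mv_swap, true_and, and_true]
        have := C i1 i2 h (by omega)
        split_ifs <;> first | omega | (exfalso; tauto)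
      · simp only [mv_swap, true_and, and_true]
        split_ifs <;> first | omega | (exfalso; tauto)
      · simp only [mv_swap, true_and, and_true]
        split_ifs <;> first | omega | (exfalso; tauto)
    · rw [h', hψ]
      refine mv_hook2 (a := a) (b := b) _ (by simp; omega) ?_ hT (row_le_of_lt ?_) ?_ ?_ ?_
      · clear R C hT key h' hF F
        intro i j
        rw [Equiv.trans_apply, swap_mem
          (fun c => c.2 < (a :: List.replicate (b + 2) 1).getD c.1 0)
          (by rw [e1]; simp; omega) (by rw [e1]; simp)]
        simp only [e1, Equiv.swap_apply_def, Prod.mk.injEq]; grind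
      · intro j1 j2 g g'
        simp only [mv_trans, mv_swap, true_and, and_true]
        have := R j1 j2 g (by omega)
        have q1 : 1 < j2 → T 0 1 < T 0 j2 := fun hh => R 1 j2 hh g'
        have q2 := C 0 (b + 1) (by omega) (by omega)
        obtain rfl | h0 := Nat.eq_zero_or_pos j1 <;> split_ifs <;> first | omega | (exfalso; tauto)
      · intro i1 i2 g g'
        simp only [mv_trans, mv_swap, true_and, and_true]
        have := C i1 i2 g (by omega)
        have := C i1 (b + 2) (by omega) (by omega)
        split_ifs <;> first | omega | (exfalso; tauto)
      · simp only [mv_trans, mv_swap, true_and, and_true]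
        split_ifs <;> first | omega | (exfalso; tauto)
      · simp only [mv_trans, mv_swap, true_and, and_true]
        split_ifs <;> first | omega | (exfalso; tauto)
  · intro T S hT hS h
    rcases key T hT with ⟨-, h1, h2⟩ | ⟨-, h1, h2⟩ <;>
    rcases key S hS with ⟨-, h3, h4⟩ | ⟨-, h3, h4⟩
    · rw [h1, h3] at h; exact mv_inj _ h
    · rw [h] at h2; omega
    · rw [h] at h2; omega
    · rw [h1, h3] at h; exact mv_inj _ h

/-- For `a > 2` and `b ≥ 1`, the hook `(a, 1^b)` is maximal in the
standard immersion poset on partitions of `a+b` if and only if `b ≤ 2`. -/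
theorem std_maximal_hook (a b : ℕ) (ha : 2 < a) (hb : 1 ≤ b) :
    StdMaximal (a + b) (a :: List.replicate b 1) ↔ b ≤ 2 := by
  constructor
  · intro h
    by_contra hb3
    obtain ⟨c, rfl⟩ : ∃ c, b = c + 2 := ⟨b - 2, by omega⟩
    refine h (a :: 2 :: List.replicate c 1) ⟨?_, ?_, ?_⟩ ?_ ⟨?_, hook_le a c ha (by omega)⟩
    · simp only [List.pairwise_cons, List.mem_cons, List.mem_replicate, List.pairwise_replicate]
      grind
    · simp only [List.mem_cons, List.mem_replicate]; grind
    · simp; omega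
    · intro he
      simp [List.replicate_succ] at he
    · intro k
      rcases k with _ | _ | k
      · simp
      · simp
      · simp only [List.take_succ_cons, List.sum_cons, List.take_replicate, List.sum_replicate,
          smul_eq_mul, mul_one]
        omega
  · intro hb2 m hm hne hle
    obtain ⟨hs, hp, hsum⟩ := hm
    have hd := hle.1 1
    have hf := hle.2
    rcases m with _ | ⟨x, m⟩
    · simp at hsum; omega
    simp at hd hsum
    have hx : b = 1 ∨ b = 2 := by omega
    have hm3 : m.sum ≤ b := by omega
    have hms : m.sum = a + b - x := by omega
    rcases m with _ | ⟨y, _ | ⟨z, _ | ⟨w, m⟩⟩⟩ <;> simp at hms hs hp hsum hne hm3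
    · rcases hx with rfl | rfl
      · obtain rfl : x = a + 1 := by omega
        have := one_row_lt a ha
        simp only [List.replicate] at hf; omega
      · obtain rfl : x = a + 2 := by omega
        have := one_row_lt2 a ha
        simp only [List.replicate] at hf; omega
    · rcases hx with rfl | rfl
      · exact absurd (hne (by omega)) (by simp; omega)
      · have : (x = a ∧ y = 2) ∨ (x = a + 1 ∧ y = 1) := by omega
        rcases this with ⟨rfl, rfl⟩ | ⟨rfl, rfl⟩
        · have := two_row_lt x ha
          simp only [List.replicate] at hf; omega
        · have := hook_lt a ha
          simp only [List.replicate] at hf; omega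
    · rcases hx with rfl | rfl
      · omega
      · have : x = a ∧ y = 1 ∧ z = 1 := by omega
        obtain ⟨rfl, rfl, rfl⟩ := this
        simp [List.replicate] at hne
    · omega
end
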